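/- arXiv:1907.01634 — 2 statements merged into one kernel-verified Lean document; each statement's English description precedes it below -/
import Mathlib

section
/- Let 0 < q < 1 and set M := φ(-q)/φ(-q^5) and N := φ(-q^6)/φ(-q^30). Then [M^8/N^8 + N^8/M^8] + 96[M^6/N^6 + N^6/M^6] + 1146[M^4/N^4 + N^4/M^4] + 2868[M^2/N^2 + N^2/M^2] + [N^8 + 5^4/N^8] - 16[N^6 + 5^3/N^6] + 188[N^4 + 5^2/N^4] - 1696[N^2 + 5/N^2] - 54[M^6 + 5^3/M^6] + 498[M^4 + 5^2/M^4] - 2106[M^2 + 5/M^2] - 4[N^8/M^6 + 5M^6/N^8] + 6[N^8/M^4 + 5^2 M^4/N^8] - 4[N^8/M^2 + 5^3 M^2/N^8] - 144[N^6/M^4 + 5M^4/N^6] + 64[N^6/M^2 + 5^2 M^2/N^6] - 479[N^4/M^2 + 5M^2/N^4] - 165[M^6/N^4 + 5N^4/M^6] + 124[M^6/N^2 + 5^2 N^2/M^6] - 936[M^4/N^2 + 5N^2/M^4] + 10[M^4 N^4 + 5^4/(M^4 N^4)] + 516[M^2 N^2 + 5^2/(M^2 N^2)] - 39[M^2 N^4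 + 5^3/(M^2 N^4)] - 120[M^4 N^2 + 5^3/(M^4 N^2)] + 12[M^6 N^2 + 5^4/(M^6 N^2)] - [M^6 N^4 + 5^5/(M^6 N^4)] + 6748 = 0. -/
open Real

/-- Ramanujan's theta function `φ(q) = ∑_{n=-∞}^∞ q^(n^2)`. -/
noncomputable def phi (q : ℝ) : ℝ := ∑' n : ℤ, q ^ (n ^ 2)

/-- Ramanujan's theta function `ψ(q) = ∑_{n=0}^∞ q^(n(n+1)/2)`. -/
noncomputable def psi (q : ℝ) : ℝ := ∑' n : ℕ, q ^ (n * (n + 1) / 2)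

/-- `fneg q` is Ramanujan's `f(-q) = ∑_{n=-∞}^∞ (-1)^n q^(n(3n-1)/2)`. -/
noncomputable def fneg (q : ℝ) : ℝ := ∑' n : ℤ, (-1 : ℝ) ^ n * q ^ (n * (3 * n - 1) / 2)

/-!
Dissecting the double series of `φ(q) φ(q¹⁵)`, `φ(q³) φ(q⁵)` and `φ(q)² - φ(q⁵)²` along sublattices
of `ℤ²` relates the values of theta functions at `q` to those at `-q²`. Together with the rule that
a function `R ≥ 0` with `R(q)² = R(-q²)` and `R(q) → 1` as `q → 0` is identically `1`, this gives
two modular equations for the multiplier `m(q) = φ(q)² / φ(q⁵)²`: one of degree five between `m(q)`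
and `m(-q²)`, and one of degree fifteen between `m(q)` and `m(q³)`. In the theorem `M² = m(-q)` and
`N² = m(-q⁶)`, so the first links `M²` and the second `N²` to the common quantity `y = m(-q²)`, and
the claim is the resultant of the two relations with respect to `y`.
-/

open Filter Topology Asymptotics

section Nomes

/-- The admissible arguments of the theta functions: nonzero real numbers of absolute value less
than one. The value `0` is excluded so that powers with integer exponents behave well. -/
structure IsNome (q : ℝ) : Prop where
  ne_zero : q ≠ 0
  abs_lt_one : |q| < 1

namespace IsNome

variable {q : ℝ}

lemma neg (hq : IsNome q) : IsNome (-q) :=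
  ⟨neg_ne_zero.mpr hq.ne_zero, by rw [abs_neg]; exact hq.abs_lt_one⟩

lemma pow (hq : IsNome q) (n : ℕ) [NeZero n] : IsNome (q ^ n) :=
  ⟨pow_ne_zero n hq.ne_zero,
    by rw [abs_pow]; exact pow_lt_one₀ (abs_nonneg q) hq.abs_lt_one (NeZero.ne n)⟩

lemma sqrt (hq : IsNome q) (h0 : 0 < q) : IsNome √q :=
  ⟨(sqrt_pos.mpr h0).ne', by
    rw [abs_of_nonneg (sqrt_nonneg q), sqrt_lt' one_pos, one_pow]
    exact (le_abs_self q).trans_lt hq.abs_lt_one⟩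

lemma tendsto_neg_pow_two_pow (hq : IsNome q) :
    Tendsto (fun n : ℕ => -q ^ 2 ^ (n + 1)) atTop (𝓝[≠] 0) := by
  refine tendsto_nhdsWithin_iff.mpr
    ⟨?_, .of_forall fun n => neg_ne_zero.mpr (pow_ne_zero _ hq.ne_zero)⟩
  simpa using ((tendsto_pow_atTop_nhds_zero_of_abs_lt_one hq.abs_lt_one).comp
    ((tendsto_pow_atTop_atTop_of_one_lt one_lt_two).comp (tendsto_add_atTop_nat 1))).neg

theorem neg_sq_induction {P : ℝ → Prop} (near_zero : ∀ᶠ q in 𝓝[≠] 0, P q)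
    (step : ∀ q, IsNome q → P (-q ^ 2) → P q) (hq : IsNome q) : P q := by
  obtain ⟨n, hn⟩ := (hq.tendsto_neg_pow_two_pow.eventually near_zero).exists
  induction n with
  | zero => exact step q hq (by simpa using hn)
  | succ n ih =>
    refine ih (step _ (hq.pow _).neg ?_)
    rwa [neg_sq, ← pow_mul, ← pow_succ]

theorem eq_zero_of_eq_mul_neg_sq {s : ℝ → ℝ} {c : ℝ} (hs : s =o[𝓝 0] fun q => q)
    (h : ∀ q, IsNome q → s q = c * s (-q ^ 2)) (hq : IsNome q) : s q = 0 := by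
  obtain ⟨k, hk⟩ := exists_nat_ge |c|
  -- The weight `w x = x / (1 - x) ^ k` satisfies `|c| * w (x ^ 2) ≤ w x`.
  have weight (ε : ℝ) (hε : 0 < ε) : |s q| ≤ ε * (|q| / (1 - |q|) ^ k) := by
    refine neg_sq_induction (P := fun q => |s q| ≤ ε * (|q| / (1 - |q|) ^ k)) ?_ ?_ hq
    · have near : ∀ᶠ q : ℝ in 𝓝 0, |q| < 1 :=
        (continuous_abs.tendsto 0).eventually_lt_const (by simp)
      refine nhdsWithin_le_nhds ?_
      filter_upwards [hs.bound hε, near] with q hsq hq1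
      refine hsq.trans (mul_le_mul_of_nonneg_left ?_ hε.le)
      exact le_div_self (abs_nonneg q) (pow_pos (by linarith) k)
        (pow_le_one₀ (by linarith) (by linarith [abs_nonneg q]))
    · intro q hq ih
      have hlt : 0 < 1 - |q| := sub_pos.mpr hq.abs_lt_one
      have bernoulli : |c| * |q| ≤ (1 + |q|) ^ k := by
        have := one_add_mul_le_pow (by linarith [abs_nonneg q] : -2 ≤ |q|) k
        nlinarith [abs_nonneg q]
      have factor : 1 - |-q ^ 2| = (1 + |q|) * (1 - |q|) := by
        rw [abs_neg, abs_pow]; ring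
      calc |s q| = |c| * |s (-q ^ 2)| := by rw [h q hq, abs_mul]
        _ ≤ |c| * (ε * (|-q ^ 2| / (1 - |-q ^ 2|) ^ k)) := by gcongr
        _ = ε * (|q| / (1 - |q|) ^ k) * (|c| * |q| / (1 + |q|) ^ k) := by
          rw [factor, mul_pow, abs_neg, abs_pow]; field_simp
        _ ≤ ε * (|q| / (1 - |q|) ^ k) :=
          mul_le_of_le_one_right (by positivity) ((div_le_one (by positivity)).mpr bernoulli)
  have pos : 0 < |q| / (1 - |q|) ^ k :=
    div_pos (abs_pos.mpr hq.ne_zero) (pow_pos (sub_pos.mpr hq.abs_lt_one) k)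
  refine abs_nonpos_iff.mp (le_of_forall_pos_le_add fun δ hδ => ?_)
  simpa only [zero_add, div_mul_cancel₀ δ pos.ne'] using weight _ (div_pos hδ pos)

theorem eq_one_of_sq_eq_neg_sq {R : ℝ → ℝ} (hR : Tendsto R (𝓝[≠] 0) (𝓝 1))
    (nonneg : ∀ q, IsNome q → 0 ≤ R q) (h : ∀ q, IsNome q → R q ^ 2 = R (-q ^ 2))
    (hq : IsNome q) : R q = 1 := by
  refine eq_of_abs_sub_nonpos (le_of_forall_pos_le_add fun ε hε => ?_)
  rw [zero_add]
  refine neg_sq_induction (P := fun q => |R q - 1| ≤ ε) ?_ (fun q hq ih => ?_) hq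
  · exact hR (Metric.closedBall_mem_nhds 1 hε)
  · rw [← h q hq, show R q ^ 2 - 1 = (R q - 1) * (R q + 1) by ring, abs_mul,
      abs_of_nonneg (by linarith [nonneg q hq] : 0 ≤ R q + 1)] at ih
    nlinarith [nonneg q hq, abs_nonneg (R q - 1)]

end IsNome

end Nomes

section LatticeSums

/-- The affine bijection `(m, n) ↦ (a m + b n + x, c m + d n + y)` of the lattice `ℤ × ℤ` whose
linear part has determinant `±1`. -/
def latticeAffineEquiv (a b c d x y : ℤ) (h : |a * d - b * c| = 1) : ℤ × ℤ ≃ ℤ × ℤ where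
  toFun p := (a * p.1 + b * p.2 + x, c * p.1 + d * p.2 + y)
  invFun p := ((a * d - b * c) * (d * (p.1 - x) - b * (p.2 - y)),
    (a * d - b * c) * (a * (p.2 - y) - c * (p.1 - x)))
  left_inv p := by
    have hsq : (a * d - b * c) ^ 2 = 1 := by rw [← sq_abs, h, one_pow]
    ext
    · linear_combination p.1 * hsq
    · linear_combination p.2 * hsq
  right_inv p := by
    have hsq : (a * d - b * c) ^ 2 = 1 := by rw [← sq_abs, h, one_pow]
    ext
    · linear_combination (p.1 - x) * hsq
    · linear_combination (p.2 - y) * hsq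

lemma tsum_eq_tsum_of_affine {α : Type*} [AddCommMonoid α] [TopologicalSpace α] {f g : ℤ × ℤ → α}
    (a b c d x y : ℤ) (hg : ∀ m n, g (m, n) = f (a * m + b * n + x, c * m + d * n + y))
    (h : |a * d - b * c| = 1 := by decide) : ∑' p, g p = ∑' p, f p := by
  rw [← (latticeAffineEquiv a b c d x y h).tsum_eq f]
  exact tsum_congr fun p => hg p.1 p.2

variable {α : Type*} [AddCommGroup α] [UniformSpace α] [IsUniformAddGroup α] [CompleteSpace α]
  {f : ℤ × ℤ → α}

lemma summable_of_affine {g : ℤ × ℤ → α} (hf : Summable f) (a b c d x y : ℤ)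
    (hg : ∀ m n, g (m, n) = f (a * m + b * n + x, c * m + d * n + y))
    (h : a * d - b * c ≠ 0 := by decide) : Summable g := by
  have injective : Function.Injective fun p : ℤ × ℤ =>
      (a * p.1 + b * p.2 + x, c * p.1 + d * p.2 + y) := by
    rintro ⟨m, n⟩ ⟨m', n'⟩ hmn
    obtain ⟨h1, h2⟩ := Prod.ext_iff.mp hmn
    dsimp only at h1 h2
    ext <;> refine mul_left_cancel₀ h ?_
    · linear_combination d * h1 - b * h2
    · linear_combination a * h2 - c * h1
  exact (hf.comp_injective injective).congr fun p => (hg p.1 p.2).symm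

variable [T0Space α]

lemma tsum_eq_sum_residue_classes (hf : Summable f) (N : ℕ) [NeZero N] :
    ∑' p, f p = ∑ r : Fin N, ∑' p : ℤ × ℤ, f (p.1, p.2 * N + r) := by
  let e : Fin N × (ℤ × ℤ) ≃ ℤ × ℤ := ((Equiv.prodComm _ _).trans (Equiv.prodAssoc _ _ _)).trans
    ((Equiv.refl ℤ).prodCongr (Int.divModEquiv N).symm)
  have hfe : Summable fun x => f (e x) := e.summable_iff.mpr hf
  rw [← e.tsum_eq f, hfe.tsum_prod, tsum_fintype]
  rfl

lemma tsum_eq_tsum_even_add_tsum_odd (hf : Summable f) :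
    ∑' p, f p = ∑' p : ℤ × ℤ, f (p.1, 2 * p.2) + ∑' p : ℤ × ℤ, f (p.1, 2 * p.2 + 1) := by
  simp [tsum_eq_sum_residue_classes hf 2, mul_comm]

lemma tsum_eq_tsum_add_sub (hf : Summable f) :
    ∑' p, f p = ∑' p : ℤ × ℤ, f (p.1 + p.2, p.1 - p.2)
      + ∑' p : ℤ × ℤ, f (p.1 + p.2 + 1, p.1 - p.2) := by
  let g : ℤ × ℤ → α := fun p => f (p.2 - p.1, p.1)
  have hg : Summable g := summable_of_affine hf (-1) 1 1 0 0 0 fun m n => by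
    simp only [g]; ring_nf
  calc ∑' p, f p = ∑' p, g p := tsum_eq_tsum_of_affine 0 1 1 1 0 0 fun m n => by
        simp only [g]; ring_nf
    _ = ∑' p : ℤ × ℤ, g (p.1, 2 * p.2) + ∑' p : ℤ × ℤ, g (p.1, 2 * p.2 + 1) :=
      tsum_eq_tsum_even_add_tsum_odd hg
    _ = _ := by
      congr 1
      · exact tsum_eq_tsum_of_affine 0 1 (-1) 1 0 0 fun m n => by simp only [g]; ring_nf
      · exact tsum_eq_tsum_of_affine 0 1 (-1) 1 0 0 fun m n => by simp only [g]; ring_nf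

lemma tsum_eq_tsum_even_sum_of_antisymm [IsAddTorsionFree α] (hf : Summable f)
    (antisymm : ∀ k l, Odd (k + l) → f (l, k) = -f (k, l)) :
    ∑' p, f p = ∑' p : ℤ × ℤ, f (p.1 + p.2, p.1 - p.2) := by
  have odd_part : ∑' p : ℤ × ℤ, f (p.1 + p.2 + 1, p.1 - p.2) = 0 := by
    refine self_eq_neg.mp ?_
    rw [← tsum_neg]
    refine tsum_eq_tsum_of_affine 1 0 0 (-1) 0 (-1) fun m n => ?_
    rw [← antisymm _ _ ⟨m, by ring⟩]
    ring_nf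
  rw [tsum_eq_tsum_add_sub hf, odd_part, add_zero]

end LatticeSums

section BinaryTheta

/-- The theta series `∑_{m, n ∈ ℤ} q ^ Q(m, n)` of an integer valued function `Q` of two integers,
typically a positive definite quadratic polynomial. -/
noncomputable def binaryTheta (Q : ℤ → ℤ → ℤ) (q : ℝ) : ℝ := ∑' p : ℤ × ℤ, q ^ Q p.1 p.2

variable {Q Q' : ℤ → ℤ → ℤ} {q : ℝ}

lemma binaryTheta_eq_of_affine (a b c d x y : ℤ)
    (hQ : ∀ m n, Q' m n = Q (a * m + b * n + x) (c * m + d * n + y))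
    (h : |a * d - b * c| = 1 := by decide) : binaryTheta Q' q = binaryTheta Q q :=
  tsum_eq_tsum_of_affine a b c d x y (fun m n => by rw [hQ]) h

variable (hQ : Summable fun p : ℤ × ℤ => q ^ Q p.1 p.2)
include hQ

lemma binaryTheta_eq_sum_residue_classes (N : ℕ) [NeZero N] :
    binaryTheta Q q = ∑ r : Fin N, binaryTheta (fun m n => Q m (n * N + r)) q :=
  tsum_eq_sum_residue_classes hQ N

lemma binaryTheta_even_add_odd : binaryTheta Q q =
    binaryTheta (fun m n => Q m (2 * n)) q + binaryTheta (fun m n => Q m (2 * n + 1)) q :=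
  tsum_eq_tsum_even_add_tsum_odd hQ

lemma binaryTheta_add_sub : binaryTheta Q q = binaryTheta (fun m n => Q (m + n) (m - n)) q
    + binaryTheta (fun m n => Q (m + n + 1) (m - n)) q :=
  tsum_eq_tsum_add_sub hQ

lemma binaryTheta_eq_two_mul_even (x : ℤ) (hsymm : ∀ m n, Q m n = Q (x - m) (-1 - n)) :
    binaryTheta Q q = 2 * binaryTheta (fun m n => Q m (2 * n)) q := by
  have odd_eq_even : binaryTheta (fun m n => Q m (2 * n + 1)) q =
      binaryTheta (fun m n => Q m (2 * n)) q :=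
    binaryTheta_eq_of_affine (-1) 0 0 (-1) x (-1) fun m n => by rw [hsymm]; ring_nf
  rw [binaryTheta_even_add_odd hQ, odd_eq_even, two_mul]

end BinaryTheta

section Theta

/-- The theta series `∑_{m ∈ ℤ} q ^ (c m² + e m)`, which is Ramanujan's `f(q^(c+e), q^(c-e))`. It
contains `φ` (`c = 1`, `e = 0`) and `ψ` (`c = 2`, `e = 1`). -/
noncomputable def theta (c : ℕ) (e : ℤ) (q : ℝ) : ℝ := ∑' m : ℤ, q ^ (c * m ^ 2 + e * m)

variable {c c' : ℕ} {e e' : ℤ} {q r : ℝ}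

lemma abs_le_quadratic (h : |e| < c) (m : ℤ) : |m| ≤ c * m ^ 2 + e * m := by
  have hem : -(|e| * |m|) ≤ e * m := by rw [← abs_mul]; exact neg_abs_le _
  have hm : |m| ≤ m ^ 2 := by
    rw [← sq_abs]
    exact Int.le_self_sq |m|
  nlinarith [abs_nonneg e, abs_nonneg m]

lemma abs_zpow_le_pow_natAbs (hq : |q| < 1) {m k : ℤ} (h : |m| ≤ k) :
    |q ^ k| ≤ |q| ^ m.natAbs := by
  lift k to ℕ using (abs_nonneg m).trans h
  rw [zpow_natCast, abs_pow]
  exact pow_le_pow_of_le_one (abs_nonneg q) hq.le (by zify; exact h)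

lemma summable_pow_natAbs (h0 : 0 ≤ r) (h1 : r < 1) : Summable fun m : ℤ => r ^ m.natAbs :=
  Summable.of_nat_of_neg (by simpa using summable_geometric_of_lt_one h0 h1)
    (by simpa using summable_geometric_of_lt_one h0 h1)

lemma summable_norm_theta (hq : |q| < 1) (h : |e| < c) :
    Summable fun m : ℤ => ‖q ^ (c * m ^ 2 + e * m)‖ :=
  .of_nonneg_of_le (fun _ => norm_nonneg _)
    (fun m => abs_zpow_le_pow_natAbs hq (abs_le_quadratic h m))
    (summable_pow_natAbs (abs_nonneg q) hq)

lemma phi_eq_theta (q : ℝ) : phi q = theta 1 0 q := by simp [phi, theta]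

lemma psi_eq_theta (q : ℝ) : psi q = theta 2 1 q := by
  rw [psi, theta, ← Equiv.intEquivNat.tsum_eq]
  refine tsum_congr fun m => ?_
  rw [← zpow_natCast]
  congr 1
  rcases m with m | m
  · change ((2 * m * (2 * m + 1) / 2 : ℕ) : ℤ) = _
    rw [show 2 * m * (2 * m + 1) / 2 = m * (2 * m + 1) from
      Nat.div_eq_of_eq_mul_left two_pos (by ring)]
    push_cast [Int.ofNat_eq_natCast]
    ring
  · change (((2 * m + 1) * (2 * m + 1 + 1) / 2 : ℕ) : ℤ) = _
    rw [show (2 * m + 1) * (2 * m + 1 + 1) / 2 = (2 * m + 1) * (m + 1) from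
      Nat.div_eq_of_eq_mul_left two_pos (by ring)]
    push_cast [Int.negSucc_eq]
    ring

lemma neg_zpow_quadratic (h : Odd (c + e)) (q : ℝ) (m : ℤ) :
    (-q) ^ (c * m ^ 2 + e * m) = (-1) ^ m * q ^ (c * m ^ 2 + e * m) := by
  have even : Even (c * m ^ 2 + e * m - m) := by
    obtain ⟨k, hk⟩ := h
    have : c * m ^ 2 + e * m - m = c * (m * (m - 1)) + 2 * (k * m) := by linear_combination m * hk
    rw [this]
    exact ((Int.even_mul_pred_self m).mul_left _).add (even_two_mul _)
  rw [neg_eq_neg_one_mul, mul_zpow, ← sub_add_cancel ((c : ℤ) * m ^ 2 + e * m) m,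
    zpow_add₀ (by norm_num : (-1 : ℝ) ≠ 0), even.neg_one_zpow, one_mul]

lemma hasSum_theta_mul_theta (hq : |q| < 1) (hr : |r| < 1) (h : |e| < c) (h' : |e'| < c') :
    HasSum (fun p : ℤ × ℤ => q ^ (c * p.1 ^ 2 + e * p.1) * r ^ (c' * p.2 ^ 2 + e' * p.2))
      (theta c e q * theta c' e' r) := by
  have sq := summable_norm_theta hq h
  have sr := summable_norm_theta hr h'
  rw [theta, theta, tsum_mul_tsum_of_summable_norm sq sr]
  exact (summable_mul_of_summable_norm sq sr).hasSum

end Theta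

section Products

variable {c c' : ℕ} {e e' : ℤ} {q : ℝ}

lemma hasSum_theta_pow_mul_theta_pow (hq : IsNome q) (i j : ℕ) [NeZero i] [NeZero j]
    (h : |e| < c) (h' : |e'| < c') :
    HasSum (fun p : ℤ × ℤ => q ^ (i * (c * p.1 ^ 2 + e * p.1) + j * (c' * p.2 ^ 2 + e' * p.2)))
      (theta c e (q ^ i) * theta c' e' (q ^ j)) := by
  simpa only [zpow_add₀ hq.ne_zero, zpow_mul q, zpow_natCast] using
    hasSum_theta_mul_theta (hq.pow i).abs_lt_one (hq.pow j).abs_lt_one h h'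

lemma hasSum_phi_mul_phi (hq : IsNome q) (i j : ℕ) [NeZero i] [NeZero j] :
    HasSum (fun p : ℤ × ℤ => q ^ (i * p.1 ^ 2 + j * p.2 ^ 2)) (phi (q ^ i) * phi (q ^ j)) := by
  simpa [phi_eq_theta] using
    hasSum_theta_pow_mul_theta_pow (c := 1) (e := 0) (c' := 1) (e' := 0) hq i j (by simp) (by simp)

lemma hasSum_phi_neg_mul_theta_neg (hq : IsNome q) (hodd : Odd (c + e)) (h : |e| < c)
    (i j : ℕ) [NeZero i] [NeZero j] :
    HasSum (fun p : ℤ × ℤ => (-1) ^ (p.1 + p.2) * q ^ (i * p.1 ^ 2 + j * (c * p.2 ^ 2 + e * p.2)))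
      (phi (-q ^ i) * theta c e (-q ^ j)) := by
  rw [phi_eq_theta]
  refine (hasSum_theta_mul_theta (hq.pow i).neg.abs_lt_one (hq.pow j).neg.abs_lt_one
    (by simp) h).congr_fun fun p => ?_
  rw [neg_zpow_quadratic (by simp), neg_zpow_quadratic hodd, mul_mul_mul_comm,
    ← zpow_natCast q, ← zpow_natCast q, ← zpow_mul, ← zpow_mul, ← zpow_add₀ hq.ne_zero,
    ← zpow_add₀ (by norm_num)]
  push_cast
  ring_nf

lemma hasSum_phi_neg_mul_phi_neg (hq : IsNome q) (i j : ℕ) [NeZero i] [NeZero j] :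
    HasSum (fun p : ℤ × ℤ => (-1) ^ (p.1 + p.2) * q ^ (i * p.1 ^ 2 + j * p.2 ^ 2))
      (phi (-q ^ i) * phi (-q ^ j)) := by
  simpa [← phi_eq_theta] using
    hasSum_phi_neg_mul_theta_neg (c := 1) (e := 0) hq (by decide) (by simp) i j

/-- The values of `i x² + j y²` at the lattice points `(x, y) = (m + n, m - n)`, which are those
with `x + y` even. -/
def evenForm (i j : ℕ) (m n : ℤ) : ℤ := i * (m + n) ^ 2 + j * (m - n) ^ 2

/-- The values of `i x² + j y²` at the lattice points `(x, y) = (m + 2 n + 1, m - 2 n)`. Together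
with their negatives these are the points with `x + y` odd. -/
def oddForm (i j : ℕ) (m n : ℤ) : ℤ := i * (m + 2 * n + 1) ^ 2 + j * (m - 2 * n) ^ 2

lemma summable_zpow_evenForm (hq : IsNome q) (i j : ℕ) [NeZero i] [NeZero j] :
    Summable fun p : ℤ × ℤ => q ^ evenForm i j p.1 p.2 :=
  summable_of_affine (hasSum_phi_mul_phi hq i j).summable 1 1 1 (-1) 0 0 fun m n => by
    simp only [evenForm]; ring_nf

lemma two_mul_binaryTheta_oddForm (hq : IsNome q) (i j : ℕ) [NeZero i] [NeZero j] :
    2 * binaryTheta (oddForm i j) q =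
      binaryTheta (fun m n => i * (m + n + 1) ^ 2 + j * (m - n) ^ 2) q := by
  have summable_odd : Summable fun p : ℤ × ℤ =>
      q ^ (i * (p.1 + p.2 + 1) ^ 2 + j * (p.1 - p.2) ^ 2) :=
    summable_of_affine (hasSum_phi_mul_phi hq i j).summable 1 1 1 (-1) 1 0 fun m n => by ring_nf
  exact (binaryTheta_eq_two_mul_even (Q := fun m n => i * (m + n + 1) ^ 2 + j * (m - n) ^ 2)
    summable_odd (-1) fun m n => by ring).symm

lemma phi_mul_phi_eq_add (hq : IsNome q) (i j : ℕ) [NeZero i] [NeZero j] :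
    phi (q ^ i) * phi (q ^ j) =
      binaryTheta (evenForm i j) q + 2 * binaryTheta (oddForm i j) q := by
  have h := hasSum_phi_mul_phi hq i j
  rw [← h.tsum_eq, two_mul_binaryTheta_oddForm hq]
  exact binaryTheta_add_sub (Q := fun m n => i * m ^ 2 + j * n ^ 2) h.summable

lemma phi_neg_mul_phi_neg_eq_sub (hq : IsNome q) (i j : ℕ) [NeZero i] [NeZero j] :
    phi (-q ^ i) * phi (-q ^ j) =
      binaryTheta (evenForm i j) q - 2 * binaryTheta (oddForm i j) q := by
  have h := hasSum_phi_neg_mul_phi_neg hq i j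
  rw [← h.tsum_eq, tsum_eq_tsum_add_sub h.summable, two_mul_binaryTheta_oddForm hq, sub_eq_add_neg,
    binaryTheta, binaryTheta, ← tsum_neg]
  congr 1 <;> refine tsum_congr fun p => ?_
  · rw [(by ring : p.1 + p.2 + (p.1 - p.2) = 2 * p.1), (even_two_mul _).neg_one_zpow, one_mul,
      evenForm]
  · rw [(by ring : p.1 + p.2 + 1 + (p.1 - p.2) = 2 * p.1 + 1), (odd_two_mul_add_one _).neg_one_zpow,
      neg_one_mul]

lemma phi_sq_add_phi_neg_sq (hq : IsNome q) :
    phi q ^ 2 + phi (-q) ^ 2 = 2 * phi (q ^ 2) ^ 2 := by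
  have even : phi (q ^ 2) ^ 2 = binaryTheta (evenForm 1 1) q := by
    rw [sq, ← (hasSum_phi_mul_phi hq 2 2).tsum_eq, binaryTheta]
    exact tsum_congr fun p => by simp only [evenForm]; push_cast; ring_nf
  have plus := phi_mul_phi_eq_add hq 1 1
  have minus := phi_neg_mul_phi_neg_eq_sub hq 1 1
  rw [pow_one] at plus minus
  linear_combination plus + minus - 2 * even

lemma hasSum_theta_mul_theta_neg (hq : IsNome q) (hodd : Odd (c + e)) (h : |e| < c) :
    HasSum (fun p : ℤ × ℤ => (-1) ^ p.2 * q ^ (c * (p.1 ^ 2 + p.2 ^ 2) + e * (p.1 + p.2)))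
      (theta c e q * theta c e (-q)) := by
  refine (hasSum_theta_mul_theta hq.abs_lt_one hq.neg.abs_lt_one h h).congr_fun fun p => ?_
  rw [neg_zpow_quadratic hodd, mul_left_comm, ← zpow_add₀ hq.ne_zero]
  ring_nf

lemma theta_mul_theta_neg (hq : IsNome q) (hodd : Odd (c + e)) (h : |e| < c) :
    theta c e q * theta c e (-q) = phi (-q ^ (2 * c)) * theta c e (-q ^ 2) := by
  have : NeZero c := ⟨by rintro rfl; exact (abs_nonneg e).not_gt h⟩
  have lhs := hasSum_theta_mul_theta_neg hq hodd h
  have rhs := hasSum_phi_neg_mul_theta_neg hq hodd h (2 * c) 2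
  have antisymm (k l : ℤ) (hkl : Odd (k + l)) :
      (-1 : ℝ) ^ k * q ^ (c * (l ^ 2 + k ^ 2) + e * (l + k)) =
        -((-1) ^ l * q ^ (c * (k ^ 2 + l ^ 2) + e * (k + l))) := by
    have cross : (-1 : ℝ) ^ k * (-1) ^ l = -1 := by
      rw [← zpow_add₀ (by norm_num), hkl.neg_one_zpow]
    have square : (-1 : ℝ) ^ l * (-1) ^ l = 1 := by
      rw [← zpow_add₀ (by norm_num), Even.neg_one_zpow ⟨l, rfl⟩]
    rw [add_comm (l ^ 2), add_comm l k]
    linear_combination q ^ (c * (k ^ 2 + l ^ 2) + e * (k + l)) *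
      ((-1) ^ l * cross - (-1) ^ k * square)
  rw [← lhs.tsum_eq, ← rhs.tsum_eq, tsum_eq_tsum_even_sum_of_antisymm lhs.summable antisymm]
  exact tsum_eq_tsum_of_affine 0 (-1) 1 0 0 0 fun m n => by push_cast; ring_nf

lemma phi_mul_phi_neg (hq : IsNome q) : phi q * phi (-q) = phi (-q ^ 2) ^ 2 := by
  simpa only [← phi_eq_theta, mul_one, ← sq] using
    theta_mul_theta_neg hq (c := 1) (e := 0) (by decide) (by simp)

lemma psi_mul_psi_neg (hq : IsNome q) : psi q * psi (-q) = phi (-q ^ 4) * psi (-q ^ 2) := by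
  simpa only [psi_eq_theta] using theta_mul_theta_neg hq (c := 2) (e := 1) (by decide) (by simp)

lemma psi_sq (hq : IsNome q) : psi q ^ 2 = phi q * psi (q ^ 2) := by
  have lhs := hasSum_theta_pow_mul_theta_pow (c := 2) (e := 1) (c' := 2) (e' := 1) hq 1 1
    (by simp) (by simp)
  have rhs := hasSum_theta_pow_mul_theta_pow (c := 2) (e := 1) (c' := 1) (e' := 0) hq 2 1
    (by simp) (by simp)
  rw [pow_one] at lhs rhs
  rw [sq, mul_comm (phi q), psi_eq_theta, psi_eq_theta, phi_eq_theta, ← lhs.tsum_eq, ← rhs.tsum_eq,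
    tsum_eq_tsum_add_sub lhs.summable, tsum_eq_tsum_even_add_tsum_odd rhs.summable]
  congr 1
  · exact tsum_eq_tsum_of_affine 1 0 0 1 0 0 fun m n => by push_cast; ring_nf
  · exact tsum_eq_tsum_of_affine (-1) 0 0 1 (-1) 0 fun m n => by push_cast; ring_nf

end Products

section QuinticDissection

variable {q : ℝ}

/-- The exponents of the double series `q θ(5, 4; q) θ(5, 2; q)`. -/
def thetaForm (m n : ℤ) : ℤ := 1 + (5 * m ^ 2 + 4 * m + (5 * n ^ 2 + 2 * n))

lemma mul_theta_mul_theta (hq : IsNome q) :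
    q * (theta 5 4 q * theta 5 2 q) = binaryTheta thetaForm q := by
  have h := (hasSum_theta_pow_mul_theta_pow (c := 5) (e := 4) (c' := 5) (e' := 2) hq 1 1
    (by decide) (by decide)).mul_left q
  rw [pow_one] at h
  simp [← h.tsum_eq, binaryTheta, thetaForm, zpow_add₀ hq.ne_zero]

lemma phi_sq_sub_phi_pow_five_sq (hq : IsNome q) :
    phi q ^ 2 - phi (q ^ 5) ^ 2 = 4 * q * (theta 5 4 q * theta 5 2 q) := by
  let Q (m n : ℤ) : ℤ := (2 * m + n) ^ 2 + m ^ 2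
  have hphi := hasSum_phi_mul_phi hq 1 1
  have hQ : Summable fun p : ℤ × ℤ => q ^ Q p.1 p.2 :=
    summable_of_affine hphi.summable 2 1 1 0 0 0 fun m n => by simp only [Q]; push_cast; ring_nf
  have phi_sq : phi q ^ 2 = binaryTheta Q q := by
    rw [pow_one, ← sq] at hphi
    rw [← hphi.tsum_eq]
    exact tsum_eq_tsum_of_affine 0 1 1 (-2) 0 0 fun m n => by simp only [Q]; push_cast; ring_nf
  have zero_class : phi (q ^ 5) ^ 2 = binaryTheta (fun m n => Q m (n * 5)) q := by
    rw [sq, ← (hasSum_phi_mul_phi hq 5 5).tsum_eq]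
    exact tsum_eq_tsum_of_affine 2 (-1) (-1) 0 0 0 fun m n => by simp only [Q]; push_cast; ring_nf
  have nonzero_class (r a b c d x y : ℤ)
      (hr : ∀ m n, Q m (n * 5 + r) = thetaForm (a * m + b * n + x) (c * m + d * n + y))
      (h : |a * d - b * c| = 1 := by decide) :
      binaryTheta (fun m n => Q m (n * 5 + r)) q = q * (theta 5 4 q * theta 5 2 q) := by
    rw [mul_theta_mul_theta hq, binaryTheta_eq_of_affine a b c d x y hr h]
  have class_one := nonzero_class 1 1 2 0 1 0 0 fun m n => by
    simp only [Q, thetaForm]; ring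
  have class_two := nonzero_class 2 0 1 (-1) (-2) 0 (-1) fun m n => by
    simp only [Q, thetaForm]; ring
  have class_three := nonzero_class 3 0 (-1) 1 2 (-1) 1 fun m n => by
    simp only [Q, thetaForm]; ring
  have class_four := nonzero_class 4 (-1) (-2) 0 (-1) (-2) (-1) fun m n => by
    simp only [Q, thetaForm]; ring
  have split := binaryTheta_eq_sum_residue_classes hQ 5
  simp only [Nat.cast_ofNat, Fin.sum_univ_five, Fin.isValue, Fin.coe_ofNat_eq_mod, Nat.zero_mod,
    Nat.cast_zero, add_zero, Nat.one_mod, Nat.cast_one, Nat.reduceMod, Nat.mod_succ] at split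
  rw [phi_sq, zero_class, split, class_one, class_two, class_three, class_four]
  ring

end QuinticDissection

section FifteenDissection

variable {q : ℝ}

/-- The exponents of the double series `q^s ψ(q^i) ψ(q^j)`, see `psi_eq_theta`. -/
def psiForm (s i j : ℕ) (m n : ℤ) : ℤ := s + (i * (2 * m ^ 2 + m) + j * (2 * n ^ 2 + n))

lemma hasSum_pow_mul_psi_mul_psi (hq : IsNome q) (s i j : ℕ) [NeZero i] [NeZero j] :
    HasSum (fun p : ℤ × ℤ => q ^ psiForm s i j p.1 p.2) (q ^ s * (psi (q ^ i) * psi (q ^ j))) := by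
  simpa [psi_eq_theta, psiForm, zpow_add₀ hq.ne_zero] using
    (hasSum_theta_pow_mul_theta_pow (c := 2) (e := 1) (c' := 2) (e' := 1) hq i j
      (by simp) (by simp)).mul_left (q ^ s)

lemma pow_mul_psi_mul_psi_eq_add (hq : IsNome q) (s i j : ℕ) [NeZero i] [NeZero j] :
    q ^ s * (psi (q ^ i) * psi (q ^ j)) =
      binaryTheta (fun m n => psiForm s i j (m + n) (m - n)) q
        + binaryTheta (fun m n => psiForm s i j (m + n + 1) (m - n)) q := by
  have h := hasSum_pow_mul_psi_mul_psi hq s i j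
  rw [← h.tsum_eq]
  exact binaryTheta_add_sub h.summable

lemma binaryTheta_evenForm_one_fifteen (hq : IsNome q) :
    binaryTheta (evenForm 1 15) q = binaryTheta (evenForm 6 10) q
      + 2 * binaryTheta (fun m n => evenForm 1 15 m (4 * n + 1)) q := by
  have summable_even := summable_zpow_evenForm hq 1 15
  have summable_odd : Summable fun p : ℤ × ℤ => q ^ evenForm 1 15 p.1 (2 * p.2 + 1) :=
    summable_of_affine summable_even 1 0 0 2 0 1 fun m n => by ring_nf
  have even : binaryTheta (fun m n => evenForm 1 15 m (2 * n)) q = binaryTheta (evenForm 6 10) q :=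
    binaryTheta_eq_of_affine 0 1 (-1) 2 0 0 fun m n => by simp only [evenForm]; push_cast; ring
  rw [binaryTheta_even_add_odd summable_even, even,
    binaryTheta_eq_two_mul_even (Q := fun m n => evenForm 1 15 m (2 * n + 1)) summable_odd 0
      fun m n => by simp only [evenForm]; ring]
  ring_nf

lemma mul_psi_cube_mul_psi_pow_five (hq : IsNome q) :
    q * (psi (q ^ 3) * psi (q ^ 5)) = binaryTheta (oddForm 1 15) q
      + (binaryTheta (oddForm 6 10) q
        + binaryTheta (fun m n => evenForm 1 15 m (4 * n + 1)) q) := by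
  have split := pow_mul_psi_mul_psi_eq_add hq 1 3 5
  have summable_odd : Summable fun p : ℤ × ℤ => q ^ psiForm 1 3 5 (p.1 + p.2 + 1) (p.1 - p.2) :=
    summable_of_affine (hasSum_pow_mul_psi_mul_psi hq 1 3 5).summable 1 1 1 (-1) 1 0 fun m n => by
      ring_nf
  rw [pow_one, binaryTheta_even_add_odd
    (Q := fun m n => psiForm 1 3 5 (m + n + 1) (m - n)) summable_odd] at split
  rw [split]
  congr 1
  · exact binaryTheta_eq_of_affine 2 (-1) 1 0 0 0 fun m n => by
      simp only [psiForm, oddForm]; push_cast; ring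
  congr 1
  · exact binaryTheta_eq_of_affine (-1) 1 0 1 (-1) 0 fun m n => by
      simp only [psiForm, oddForm]; push_cast; ring
  · exact binaryTheta_eq_of_affine (-1) (-3) 0 (-1) (-3) (-1) fun m n => by
      simp only [psiForm, evenForm]; push_cast; ring

lemma phi_mul_phi_pow_fifteen (hq : IsNome q) :
    phi q * phi (q ^ 15) = phi (-q ^ 6) * phi (-q ^ 10) + 2 * q * (psi (q ^ 3) * psi (q ^ 5)) := by
  have dissection := phi_mul_phi_eq_add hq 1 15
  rw [pow_one, binaryTheta_evenForm_one_fifteen hq] at dissection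
  linear_combination dissection - phi_neg_mul_phi_neg_eq_sub hq 6 10
    - 2 * mul_psi_cube_mul_psi_pow_five hq

lemma binaryTheta_evenForm_three_five (hq : IsNome q) :
    binaryTheta (evenForm 3 5) q = binaryTheta (evenForm 2 30) q
      + 2 * binaryTheta (fun m n => evenForm 3 5 (m + 2 * n + 1) (2 * m + 1)) q := by
  have summable_even := summable_zpow_evenForm hq 3 5
  have summable_odd : Summable fun p : ℤ × ℤ => q ^ evenForm 3 5 (p.1 + p.2 + 1) (2 * p.1 + 1) :=
    summable_of_affine summable_even 1 1 2 0 1 1 fun m n => by ring_nf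
  have even : binaryTheta (fun m n => evenForm 3 5 m (2 * n)) q = binaryTheta (evenForm 2 30) q :=
    binaryTheta_eq_of_affine (-1) 0 (-1) 1 0 0 fun m n => by simp only [evenForm]; push_cast; ring
  have odd : binaryTheta (fun m n => evenForm 3 5 m (2 * n + 1)) q =
      binaryTheta (fun m n => evenForm 3 5 (m + n + 1) (2 * m + 1)) q :=
    (binaryTheta_eq_of_affine 1 1 1 0 1 0 fun m n => by ring_nf).symm
  rw [binaryTheta_even_add_odd summable_even, even, odd,
    binaryTheta_eq_two_mul_even (Q := fun m n => evenForm 3 5 (m + n + 1) (2 * m + 1))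
      summable_odd (-1) fun m n => by simp only [evenForm]; ring]

lemma sq_mul_psi_mul_psi_pow_fifteen (hq : IsNome q) :
    q ^ 2 * (psi q * psi (q ^ 15)) = binaryTheta (oddForm 2 30) q
      + binaryTheta (fun m n => evenForm 3 5 (m + 2 * n + 1) (2 * m + 1)) q
        + binaryTheta (oddForm 3 5) q := by
  have split := pow_mul_psi_mul_psi_eq_add hq 2 1 15
  have summable_even : Summable fun p : ℤ × ℤ => q ^ psiForm 2 1 15 (p.1 + p.2) (p.1 - p.2) :=
    summable_of_affine (hasSum_pow_mul_psi_mul_psi hq 2 1 15).summable 1 1 1 (-1) 0 0 fun m n => by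
      ring_nf
  rw [pow_one, binaryTheta_even_add_odd
    (Q := fun m n => psiForm 2 1 15 (m + n) (m - n)) summable_even] at split
  rw [split]
  congr 1
  · congr 1
    · exact binaryTheta_eq_of_affine 2 (-3) 1 (-2) 0 0 fun m n => by
        simp only [psiForm, oddForm]; push_cast; ring
    · exact binaryTheta_eq_of_affine 0 1 1 (-2) 0 (-1) fun m n => by
        simp only [psiForm, evenForm]; push_cast; ring
  · exact binaryTheta_eq_of_affine 0 (-1) 1 (-1) (-1) 0 fun m n => by
      simp only [psiForm, oddForm]; push_cast; ring

lemma phi_cube_mul_phi_pow_five (hq : IsNome q) :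
    phi (q ^ 3) * phi (q ^ 5) =
      phi (-q ^ 2) * phi (-q ^ 30) + 2 * q ^ 2 * (psi q * psi (q ^ 15)) := by
  linear_combination phi_mul_phi_eq_add hq 3 5 - phi_neg_mul_phi_neg_eq_sub hq 2 30
    + binaryTheta_evenForm_three_five hq - 2 * sq_mul_psi_mul_psi_pow_fifteen hq

end FifteenDissection

section NearZero

lemma tendsto_div_self_of_hasDerivAt {f : ℝ → ℝ} {c : ℝ} (h : HasDerivAt f c 0) (h0 : f 0 = 0) :
    Tendsto (fun q => f q / q) (𝓝[≠] 0) (𝓝 c) := by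
  simpa [h0, div_eq_inv_mul] using hasDerivAt_iff_tendsto_slope_zero.mp h

lemma isBigO_theta_sub_sum {c : ℕ} {e : ℤ} (h : |e| < c) (s : Finset ℤ) (k : ℕ)
    (hk : ∀ m ∉ s, k ≤ c * m ^ 2 + e * m) :
    (fun q : ℝ => theta c e q - ∑ m ∈ s, q ^ (c * m ^ 2 + e * m)) =O[𝓝 0] fun q => q ^ k := by
  have near : ∀ᶠ q : ℝ in 𝓝 0, |q| < 1 / 2 :=
    (continuous_abs.tendsto 0).eventually_lt_const (by simp)
  have term_le (q : ℝ) (hq : |q| < 1 / 2) (m : ℤ) (hm : m ∉ s) :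
      ‖q ^ (c * m ^ 2 + e * m)‖ ≤ 2 ^ k * (1 / 2) ^ m.natAbs * |q| ^ k := by
    obtain ⟨n, hn⟩ := Int.le.dest (hk m hm)
    have hmn : m.natAbs ≤ k + n := by zify; rw [hn]; exact abs_le_quadratic h m
    calc ‖q ^ (c * m ^ 2 + e * m)‖ = |q| ^ n * |q| ^ k := by
          rw [← hn, ← Nat.cast_add, zpow_natCast, norm_eq_abs, abs_pow, pow_add, mul_comm]
      _ ≤ (1 / 2) ^ n * |q| ^ k := by gcongr
      _ = 2 ^ k * (1 / 2) ^ (k + n) * |q| ^ k := by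
        rw [pow_add, ← mul_assoc (2 ^ k), ← mul_pow]; norm_num
      _ ≤ 2 ^ k * (1 / 2) ^ m.natAbs * |q| ^ k := by
        gcongr 2 ^ k * ?_ * |q| ^ k
        exact pow_le_pow_of_le_one (by norm_num) (by norm_num) hmn
  have summable_bound :
      Summable fun m : {m : ℤ // m ∉ s} => (2 ^ k * (1 / 2) ^ (m : ℤ).natAbs : ℝ) :=
    ((summable_pow_natAbs (by norm_num) (by norm_num)).mul_left _).subtype _
  refine .of_bound (∑' m : {m : ℤ // m ∉ s}, 2 ^ k * (1 / 2) ^ (m : ℤ).natAbs) ?_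
  filter_upwards [near] with q hq
  have hsum : Summable fun m : ℤ => q ^ (c * m ^ 2 + e * m) :=
    (summable_norm_theta (hq.trans (by norm_num)) h).of_norm
  rw [theta, ← hsum.sum_add_tsum_subtype_compl s, add_sub_cancel_left, norm_pow, norm_eq_abs q]
  exact tsum_of_norm_bounded (summable_bound.hasSum.mul_right _) fun m => term_le q hq m m.2

lemma isBigO_phi_sub : (fun q => phi q - (1 + 2 * q)) =O[𝓝 0] fun q => q ^ 2 := by
  refine (isBigO_theta_sub_sum (c := 1) (e := 0) (by simp) {-1, 0, 1} 2 fun m hm => ?_).congr_left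
    fun q => ?_
  · simp only [Finset.mem_insert, Finset.mem_singleton, not_or] at hm
    have : m ≤ -2 ∨ 2 ≤ m := by omega
    push_cast
    rcases this with h | h <;> nlinarith
  · simp [phi_eq_theta]
    ring

lemma hasDerivAt_phi_zero : HasDerivAt phi 2 0 := by
  have remainder : HasDerivAt (fun q => phi q - (1 + 2 * q)) 0 0 := by
    have := IsBigO.hasFDerivAt (𝕜 := ℝ) (n := 2) (x₀ := (0 : ℝ))
      (by simpa [abs_sq] using isBigO_phi_sub) one_lt_two
    simpa using this.hasDerivAt
  simpa using remainder.fun_add (((hasDerivAt_id (0 : ℝ)).const_mul 2).const_add 1)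

lemma phi_zero : phi 0 = 1 := by
  have h := IsBigO.eq_zero_of_norm_pow (n := 2) (x₀ := (0 : ℝ))
    (by simpa [abs_sq] using isBigO_phi_sub) two_ne_zero
  simpa [sub_eq_zero] using h

lemma hasDerivAt_phi_pow_zero {n : ℕ} (hn : 2 ≤ n) : HasDerivAt (fun q => phi (q ^ n)) 0 0 := by
  have h0 : (0 : ℝ) ^ n = 0 := zero_pow (by omega)
  have h := HasDerivAt.comp (0 : ℝ) (h₂ := phi) (h := fun q => q ^ n) (h₂' := 2)
    (by rw [h0]; exact hasDerivAt_phi_zero) (hasDerivAt_pow n 0)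
  rw [zero_pow (by omega : n - 1 ≠ 0)] at h
  simpa [Function.comp_def] using h

lemma tendsto_phi_pow (n : ℕ) [NeZero n] : Tendsto (fun q => phi (q ^ n)) (𝓝[≠] 0) (𝓝 1) := by
  have hpow : Tendsto (fun q : ℝ => q ^ n) (𝓝 0) (𝓝 0) :=
    (continuous_pow n).tendsto' 0 0 (zero_pow (NeZero.ne n))
  have hphi := hasDerivAt_phi_zero.continuousAt.tendsto
  rw [phi_zero] at hphi
  exact (hphi.comp hpow).mono_left nhdsWithin_le_nhds

lemma tendsto_psi_zero : Tendsto psi (𝓝 0) (𝓝 1) := by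
  have h : (fun q => psi q - 1) =O[𝓝 0] fun q => q ^ 1 := by
    refine (isBigO_theta_sub_sum (c := 2) (e := 1) (by simp) {0} 1 fun m hm => ?_).congr_left
      fun q => ?_
    · rw [Finset.mem_singleton] at hm
      have : m ≤ -1 ∨ 1 ≤ m := by omega
      push_cast
      rcases this with h | h <;> nlinarith
    · simp [psi_eq_theta]
  simp only [pow_one] at h
  exact tendsto_sub_nhds_zero_iff.mp (h.trans_tendsto tendsto_id)

end NearZero

section Positivity

variable {q : ℝ}

lemma theta_pos_of_pos {c : ℕ} {e : ℤ} (hq : IsNome q) (h0 : 0 < q) (h : |e| < c) :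
    0 < theta c e q :=
  (summable_norm_theta hq.abs_lt_one h).of_norm.tsum_pos (fun m => by positivity) 0 (by simp)

lemma phi_pos (hq : IsNome q) : 0 < phi q := by
  refine hq.neg_sq_induction (P := fun q => 0 < phi q) (nhdsWithin_le_nhds ?_) fun q hq ih => ?_
  · exact hasDerivAt_phi_zero.continuousAt.eventually_const_lt (by rw [phi_zero]; exact one_pos)
  · rcases hq.ne_zero.lt_or_gt with hneg | hpos
    · have pos : 0 < phi (-q) := by
        rw [phi_eq_theta]
        exact theta_pos_of_pos hq.neg (neg_pos.mpr hneg) (by simp)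
      exact pos_of_mul_pos_left (by rw [phi_mul_phi_neg hq]; positivity) pos.le
    · rw [phi_eq_theta]
      exact theta_pos_of_pos hq hpos (by simp)

lemma psi_pos (hq : IsNome q) : 0 < psi q := by
  refine hq.neg_sq_induction (P := fun q => 0 < psi q) (nhdsWithin_le_nhds ?_) fun q hq ih => ?_
  · exact tendsto_psi_zero.eventually_const_lt one_pos
  · rcases hq.ne_zero.lt_or_gt with hneg | hpos
    · have pos : 0 < psi (-q) := by
        rw [psi_eq_theta]
        exact theta_pos_of_pos hq.neg (neg_pos.mpr hneg) (by simp)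
      have pos_phi : 0 < phi (-q ^ 4) := phi_pos (hq.pow 4).neg
      exact pos_of_mul_pos_left (by rw [psi_mul_psi_neg hq]; positivity) pos.le
    · rw [psi_eq_theta]
      exact theta_pos_of_pos hq hpos (by simp)

end Positivity

section Quintic

variable {q : ℝ}

/-- The quintic combination `(φ(q)² - φ(q⁵)²) (5 φ(q⁵)² - φ(q)²)`. It is an odd function of `q`. -/
noncomputable def quintic (q : ℝ) : ℝ :=
  (phi q ^ 2 - phi (q ^ 5) ^ 2) * (5 * phi (q ^ 5) ^ 2 - phi q ^ 2)

lemma phi_pow_mul_phi_neg_pow (hq : IsNome q) (n : ℕ) [NeZero n] :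
    phi (q ^ n) * phi (-q ^ n) = phi (-q ^ (2 * n)) ^ 2 := by
  rw [phi_mul_phi_neg (hq.pow n), ← pow_mul, mul_comm 2]

lemma phi_sub_mul_neg (hq : IsNome q) :
    (phi q ^ 2 - phi (q ^ 5) ^ 2) * (phi (-q) ^ 2 - phi (-q ^ 5) ^ 2) =
      4 * phi (-q ^ 10) ^ 2 * (phi (-q ^ 2) ^ 2 - phi (-q ^ 10) ^ 2) := by
  have at_neg := phi_sq_sub_phi_pow_five_sq hq.neg
  have at_neg_sq := phi_sq_sub_phi_pow_five_sq (hq.pow 2).neg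
  rw [(by ring : (-q) ^ 5 = -q ^ 5)] at at_neg
  rw [(by ring : (-q ^ 2) ^ 5 = -q ^ 10)] at at_neg_sq
  have h54 := theta_mul_theta_neg (c := 5) (e := 4) hq (by decide) (by decide)
  have h52 := theta_mul_theta_neg (c := 5) (e := 2) hq (by decide) (by decide)
  rw [phi_sq_sub_phi_pow_five_sq hq, at_neg, at_neg_sq]
  linear_combination (-16 * q ^ 2 * (theta 5 2 q * theta 5 2 (-q))) * h54
    - 16 * q ^ 2 * (phi (-q ^ 10) * theta 5 4 (-q ^ 2)) * h52

lemma five_phi_sub_mul_neg (hq : IsNome q) :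
    (5 * phi (q ^ 5) ^ 2 - phi q ^ 2) * (5 * phi (-q ^ 5) ^ 2 - phi (-q) ^ 2) =
      4 * phi (-q ^ 2) ^ 2 * (5 * phi (-q ^ 10) ^ 2 - phi (-q ^ 2) ^ 2) := by
  have h := phi_sub_mul_neg hq
  rw [← phi_mul_phi_neg hq, ← phi_pow_mul_phi_neg_pow hq 5] at h ⊢
  linear_combination 5 * h

lemma quintic_add_neg (hq : IsNome q) :
    quintic q + quintic (-q) = 4 * (quintic (-q ^ 2) + quintic (q ^ 2)) := by
  have h := phi_sub_mul_neg hq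
  have double_one := phi_sq_add_phi_neg_sq hq
  have double_five := phi_sq_add_phi_neg_sq (hq.pow 5)
  simp only [quintic, ← pow_mul, Odd.neg_pow (by decide : Odd 5)] at double_five ⊢
  norm_num only at double_five ⊢
  rw [← phi_mul_phi_neg hq, ← phi_pow_mul_phi_neg_pow hq 5] at h ⊢
  have average_one : phi (q ^ 2) ^ 2 = (phi q ^ 2 + phi (-q) ^ 2) / 2 := by linarith
  have average_five : phi (q ^ 10) ^ 2 = (phi (q ^ 5) ^ 2 + phi (-q ^ 5) ^ 2) / 2 := by linarith
  rw [average_one, average_five]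
  linear_combination 6 * h

lemma hasDerivAt_quintic_zero : HasDerivAt quintic 16 0 := by
  have phi_one_sq := hasDerivAt_phi_zero.fun_pow 2
  have phi_five_sq := (hasDerivAt_phi_pow_zero (n := 5) (by norm_num)).fun_pow 2
  have h := (phi_one_sq.fun_sub phi_five_sq).fun_mul ((phi_five_sq.const_mul 5).fun_sub phi_one_sq)
  norm_num [phi_zero] at h
  exact h

lemma quintic_neg (hq : IsNome q) : quintic (-q) = -quintic q := by
  have hderiv : HasDerivAt (fun q => quintic q + quintic (-q)) 0 0 := by
    have := hasDerivAt_quintic_zero.fun_add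
      (HasDerivAt.comp (0 : ℝ) (h := fun q => -q) (by rw [neg_zero]; exact hasDerivAt_quintic_zero)
        (hasDerivAt_neg 0))
    simpa using this
  refine eq_neg_of_add_eq_zero_right (hq.eq_zero_of_eq_mul_neg_sq (c := 4)
    (s := fun q => quintic q + quintic (-q)) ?_ fun q hq => ?_)
  · simpa [quintic] using hasDerivAt_iff_isLittleO.mp hderiv
  · rw [quintic_add_neg hq, neg_neg]

lemma quintic_sq (hq : IsNome q) :
    quintic q ^ 2 = -16 * phi (-q ^ 2) ^ 2 * phi (-q ^ 10) ^ 2 * quintic (-q ^ 2) := by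
  calc quintic q ^ 2 = -(quintic q * quintic (-q)) := by rw [quintic_neg hq]; ring
    _ = -(((phi q ^ 2 - phi (q ^ 5) ^ 2) * (phi (-q) ^ 2 - phi (-q ^ 5) ^ 2)) *
        ((5 * phi (q ^ 5) ^ 2 - phi q ^ 2) * (5 * phi (-q ^ 5) ^ 2 - phi (-q) ^ 2))) := by
      simp only [quintic, Odd.neg_pow (by decide : Odd 5)]
      ring
    _ = _ := by
      rw [phi_sub_mul_neg hq, five_phi_sub_mul_neg hq, quintic, (by ring : (-q ^ 2) ^ 5 = -q ^ 10)]
      ring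

lemma quintic_ne_zero (hq : IsNome q) : quintic q ≠ 0 := by
  refine hq.neg_sq_induction (P := fun q => quintic q ≠ 0)
    (hasDerivAt_quintic_zero.eventually_ne (by norm_num)) fun q hq ih => ?_
  refine (pow_ne_zero_iff two_ne_zero).mp ?_
  have pos_two := phi_pos (hq.pow 2).neg
  have pos_ten := phi_pos (hq.pow 10).neg
  rw [quintic_sq hq]
  positivity

lemma quintic_neg_of_neg (hq : IsNome q) (h0 : q < 0) : quintic q < 0 := by
  have hr := hq.neg.sqrt (neg_pos.mpr h0)
  have h := quintic_sq hr
  have pos_two := phi_pos (hr.pow 2).neg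
  have pos_ten := phi_pos (hr.pow 10).neg
  have := quintic_ne_zero hr
  rw [sq_sqrt (neg_pos.mpr h0).le, neg_neg] at h pos_two
  by_contra! hle
  have : 0 < quintic √(-q) ^ 2 := by positivity
  have : 0 ≤ 16 * phi q ^ 2 * phi (-√(-q) ^ 10) ^ 2 * quintic q := by positivity
  linarith

lemma quintic_mul_quintic_cube_pos (hq : IsNome q) : 0 < quintic q * quintic (q ^ 3) := by
  wlog hneg : q < 0 generalizing q
  · have h := this hq.neg (by simpa using lt_of_le_of_ne (not_lt.mp hneg) hq.ne_zero.symm)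
    rwa [Odd.neg_pow (by decide), quintic_neg hq, quintic_neg (hq.pow 3), neg_mul_neg] at h
  exact mul_pos_of_neg_of_neg (quintic_neg_of_neg hq hneg)
    (quintic_neg_of_neg (hq.pow 3) (Odd.pow_neg (by decide) hneg))

end Quintic

section Fifteen

variable {q : ℝ}

/-- The product `φ(qⁱ) φ(qʲ)`. -/
noncomputable def phiPair (i j : ℕ) (q : ℝ) : ℝ :=
  phi (q ^ i) * phi (q ^ j)

/-- The product `ψ(qⁱ) ψ(qʲ)`. -/
noncomputable def psiPair (i j : ℕ) (q : ℝ) : ℝ :=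
  psi (q ^ i) * psi (q ^ j)

lemma phiPair_pos (hq : IsNome q) (i j : ℕ) [NeZero i] [NeZero j] : 0 < phiPair i j q :=
  mul_pos (phi_pos (hq.pow i)) (phi_pos (hq.pow j))

lemma psiPair_pos (hq : IsNome q) (i j : ℕ) [NeZero i] [NeZero j] : 0 < psiPair i j q :=
  mul_pos (psi_pos (hq.pow i)) (psi_pos (hq.pow j))

lemma psiPair_sq (hq : IsNome q) (i j : ℕ) [NeZero i] [NeZero j] :
    psiPair i j q ^ 2 = phiPair i j q * psiPair i j (q ^ 2) := by
  simp only [psiPair, phiPair, mul_pow, psi_sq (hq.pow _), ← pow_mul, mul_comm 2]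
  ring

lemma phiPair_mul_phiPair_neg (hq : IsNome q) {i j : ℕ} (hi : Odd i) (hj : Odd j)
    [NeZero i] [NeZero j] :
    phiPair i j q * phiPair i j (-q) = phiPair i j (-q ^ 2) ^ 2 := by
  simp only [phiPair, hi.neg_pow, hj.neg_pow, mul_pow, ← pow_mul, ← phi_pow_mul_phi_neg_pow hq]
  ring

lemma sqrt_phiPair_mul_sqrt_phiPair_neg (hq : IsNome q) {i j : ℕ} (hi : Odd i) (hj : Odd j)
    [NeZero i] [NeZero j] : √(phiPair i j q) * √(phiPair i j (-q)) = phiPair i j (-q ^ 2) := by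
  rw [← sqrt_mul (phiPair_pos hq i j).le, phiPair_mul_phiPair_neg hq hi hj,
    sqrt_sq (phiPair_pos (hq.pow 2).neg i j).le]

lemma sqrt_phiPair_neg_mul_psiPair (hq : IsNome q) (i j : ℕ) [NeZero i] [NeZero j] :
    √(phiPair i j (-q)) * psiPair i j q = √(phiPair i j q) * psiPair i j (-q) := by
  have pos := psiPair_pos hq i j
  have pos_neg := psiPair_pos hq.neg i j
  refine (pow_left_inj₀ (by positivity) (by positivity) two_ne_zero).mp ?_
  rw [mul_pow, mul_pow, sq_sqrt (phiPair_pos hq i j).le, sq_sqrt (phiPair_pos hq.neg i j).le,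
    psiPair_sq hq, psiPair_sq hq.neg, neg_sq]
  ring

lemma phiPair_one_fifteen (hq : IsNome q) :
    phiPair 1 15 q = phiPair 3 5 (-q ^ 2) + 2 * q * psiPair 3 5 q := by
  have h := phi_mul_phi_pow_fifteen hq
  simp only [phiPair, psiPair, pow_one, Odd.neg_pow (by decide : Odd 3),
    Odd.neg_pow (by decide : Odd 5), ← pow_mul]
  exact h

lemma phiPair_three_five (hq : IsNome q) :
    phiPair 3 5 q = phiPair 1 15 (-q ^ 2) + 2 * q ^ 2 * psiPair 1 15 q := by
  have h := phi_cube_mul_phi_pow_five hq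
  simp only [phiPair, psiPair, pow_one, Odd.neg_pow (by decide : Odd 15), ← pow_mul]
  exact h

lemma sqrt_mul_phiPair_sub (hq : IsNome q) :
    √(phiPair 3 5 (-q)) * (phiPair 1 15 q - phiPair 3 5 q) =
      √(phiPair 3 5 q) * (phiPair 3 5 (-q) - phiPair 1 15 (-q)) := by
  have at_q := phiPair_one_fifteen hq
  have at_neg := phiPair_one_fifteen hq.neg
  rw [neg_sq] at at_neg
  rw [← sqrt_phiPair_mul_sqrt_phiPair_neg hq (by decide) (by decide)] at at_q at_neg
  linear_combination √(phiPair 3 5 (-q)) * at_q + √(phiPair 3 5 q) * at_neg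
    + 2 * q * sqrt_phiPair_neg_mul_psiPair hq 3 5
    + √(phiPair 3 5 (-q)) * sq_sqrt (phiPair_pos hq 3 5).le
    + √(phiPair 3 5 q) * sq_sqrt (phiPair_pos hq.neg 3 5).le

lemma sqrt_mul_phiPair_add (hq : IsNome q) :
    √(phiPair 1 15 (-q)) * (phiPair 1 15 q + phiPair 3 5 q) =
      √(phiPair 1 15 q) * (phiPair 1 15 (-q) + phiPair 3 5 (-q)) := by
  have at_q := phiPair_three_five hq
  have at_neg := phiPair_three_five hq.neg
  rw [neg_sq] at at_neg
  rw [← sqrt_phiPair_mul_sqrt_phiPair_neg hq (by decide) (by decide)] at at_q at_neg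
  linear_combination √(phiPair 1 15 (-q)) * at_q - √(phiPair 1 15 q) * at_neg
    + 2 * q ^ 2 * sqrt_phiPair_neg_mul_psiPair hq 1 15
    - √(phiPair 1 15 (-q)) * sq_sqrt (phiPair_pos hq 1 15).le
    + √(phiPair 1 15 q) * sq_sqrt (phiPair_pos hq.neg 1 15).le

lemma pow_four_sub_pow_four_sq_of_cross {K : Type*} [Field K] [LinearOrder K]
    [IsStrictOrderedRing K] {a b a' b' : K} (ha : 0 < a) (hb : 0 < b) (ha' : 0 < a') (hb' : 0 < b')
    (hsub : b' * (a ^ 2 - b ^ 2) = b * (b' ^ 2 - a' ^ 2))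
    (hadd : a' * (a ^ 2 + b ^ 2) = a * (a' ^ 2 + b' ^ 2)) :
    (a ^ 4 - b ^ 4) ^ 2 = 4 * ((b * b') ^ 2 - (a * a') ^ 2) * a ^ 2 * b ^ 2 := by
  have hdet : (a * a') ^ 2 + (a * b' - a' * b) ^ 2 - (b * b') ^ 2 = 0 := by
    refine (mul_eq_zero.mp ?_).resolve_left (by positivity : a' * b + a * b' ≠ 0)
    linear_combination (a * (a' ^ 2 + b' ^ 2)) * hsub - (b * (b' ^ 2 - a' ^ 2)) * hadd
  have prod_add : (a ^ 2 + b ^ 2) * (a' ^ 2 + b' ^ 2) = 2 * (b * b') * (b * b' + a * a') := by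
    linear_combination hdet
  have prod_sub : (a ^ 2 - b ^ 2) * (a' ^ 2 - b' ^ 2) = 2 * (a * a') * (a * a' - b * b') := by
    linear_combination -hdet
  refine mul_left_cancel₀ (by positivity : a' * b' ≠ 0) ?_
  calc a' * b' * (a ^ 4 - b ^ 4) ^ 2
      = (a' * (a ^ 2 + b ^ 2)) * (b' * (a ^ 2 - b ^ 2)) * (a ^ 4 - b ^ 4) := by ring
    _ = -(a * b) * ((a ^ 2 + b ^ 2) * (a' ^ 2 + b' ^ 2)) *
          ((a ^ 2 - b ^ 2) * (a' ^ 2 - b' ^ 2)) := by rw [hsub, hadd]; ring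
    _ = _ := by rw [prod_add, prod_sub]; ring

/-- The difference `φ(q)²φ(q¹⁵)² - φ(q³)²φ(q⁵)²`, the degree fifteen analogue of `quintic`. -/
noncomputable def fifteen (q : ℝ) : ℝ :=
  phiPair 1 15 q ^ 2 - phiPair 3 5 q ^ 2

lemma fifteen_sq (hq : IsNome q) :
    fifteen q ^ 2 = -4 * fifteen (-q ^ 2) * phiPair 1 15 q * phiPair 3 5 q := by
  have root_pos {q : ℝ} (hq : IsNome q) (i j : ℕ) [NeZero i] [NeZero j] : 0 < √(phiPair i j q) :=
    sqrt_pos.mpr (phiPair_pos hq i j)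
  have root_sq {q : ℝ} (hq : IsNome q) (i j : ℕ) [NeZero i] [NeZero j] :
      √(phiPair i j q) ^ 2 = phiPair i j q := sq_sqrt (phiPair_pos hq i j).le
  have root_pow_four (i j : ℕ) [NeZero i] [NeZero j] : √(phiPair i j q) ^ 4 = phiPair i j q ^ 2 :=
    (pow_mul _ 2 2).trans (congrArg (· ^ 2) (root_sq hq i j))
  have h := pow_four_sub_pow_four_sq_of_cross (root_pos hq 1 15) (root_pos hq 3 5)
    (root_pos hq.neg 1 15) (root_pos hq.neg 3 5)
    (by simpa only [root_sq hq, root_sq hq.neg] using sqrt_mul_phiPair_sub hq)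
    (by simpa only [root_sq hq, root_sq hq.neg] using sqrt_mul_phiPair_add hq)
  rw [sqrt_phiPair_mul_sqrt_phiPair_neg hq (by decide) (by decide),
    sqrt_phiPair_mul_sqrt_phiPair_neg hq (by decide) (by decide)] at h
  rw [root_pow_four, root_pow_four, root_sq hq, root_sq hq] at h
  rw [fifteen, fifteen, h]
  ring

lemma hasDerivAt_fifteen_zero : HasDerivAt fifteen 4 0 := by
  have h3 := hasDerivAt_phi_pow_zero (n := 3) (by norm_num)
  have h5 := hasDerivAt_phi_pow_zero (n := 5) (by norm_num)
  have h15 := hasDerivAt_phi_pow_zero (n := 15) (by norm_num)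
  have h := ((hasDerivAt_phi_zero.fun_mul h15).fun_pow 2).fun_sub ((h3.fun_mul h5).fun_pow 2)
  norm_num [phi_zero] at h
  exact h.congr_of_eventuallyEq (.of_forall fun q => by simp only [fifteen, phiPair, pow_one])

lemma quintic_mul_quintic_cube_sq (hq : IsNome q) :
    (quintic q * quintic (q ^ 3)) ^ 2 = 256 * (phiPair 1 15 (-q ^ 2) * phiPair 3 5 (-q ^ 2)) ^ 2 *
      (quintic (-q ^ 2) * quintic ((-q ^ 2) ^ 3)) := by
  have at_cube := quintic_sq (hq.pow 3)
  simp only [← pow_mul, Nat.reduceMul] at at_cube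
  simp only [mul_pow, quintic_sq hq, at_cube, phiPair, pow_one, Odd.neg_pow (by decide : Odd 15),
    Odd.neg_pow (by decide : Odd 3), Odd.neg_pow (by decide : Odd 5), ← pow_mul, Nat.reduceMul]
  ring

/-- The quotient `F⁴ / (φ(q)²φ(q³)²φ(q⁵)²φ(q¹⁵)² U(q) U(q³))`, where `F` is `fifteen` and `U` is
`quintic`. It is identically `1`. -/
noncomputable def fifteenRatio (q : ℝ) : ℝ :=
  fifteen q ^ 4 / ((phiPair 1 15 q * phiPair 3 5 q) ^ 2 * (quintic q * quintic (q ^ 3)))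

lemma tendsto_fifteenRatio : Tendsto fifteenRatio (𝓝[≠] 0) (𝓝 1) := by
  have fifteen_div := tendsto_div_self_of_hasDerivAt hasDerivAt_fifteen_zero
    (by simp [fifteen, phiPair])
  have quintic_div := tendsto_div_self_of_hasDerivAt hasDerivAt_quintic_zero (by simp [quintic])
  have cube : Tendsto (fun q : ℝ => q ^ 3) (𝓝[≠] 0) (𝓝[≠] 0) :=
    tendsto_nhdsWithin_iff.mpr ⟨((continuous_pow 3).tendsto' 0 0 (by norm_num)).mono_left
      nhdsWithin_le_nhds, by filter_upwards [self_mem_nhdsWithin] with q hq using pow_ne_zero 3 hq⟩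
  have h := (fifteen_div.pow 4).div (((((tendsto_phi_pow 1).mul (tendsto_phi_pow 15)).mul
    ((tendsto_phi_pow 3).mul (tendsto_phi_pow 5))).pow 2).mul
      (quintic_div.mul (quintic_div.comp cube))) (by norm_num)
  norm_num only at h
  refine h.congr' ?_
  filter_upwards [self_mem_nhdsWithin] with q (hq : q ≠ 0)
  simp only [fifteenRatio, phiPair, Pi.div_apply, Function.comp_apply]
  field_simp

lemma fifteenRatio_sq (hq : IsNome q) : fifteenRatio q ^ 2 = fifteenRatio (-q ^ 2) := by
  have E_ne_zero := (phiPair_pos hq 1 15).ne'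
  have G_ne_zero := (phiPair_pos hq 3 5).ne'
  calc fifteenRatio q ^ 2
      = (fifteen q ^ 2) ^ 4 /
          ((phiPair 1 15 q * phiPair 3 5 q) ^ 4 * (quintic q * quintic (q ^ 3)) ^ 2) := by
        rw [fifteenRatio]; ring
    _ = (256 * (phiPair 1 15 q * phiPair 3 5 q) ^ 4 * fifteen (-q ^ 2) ^ 4) /
          (256 * (phiPair 1 15 q * phiPair 3 5 q) ^ 4 *
            ((phiPair 1 15 (-q ^ 2) * phiPair 3 5 (-q ^ 2)) ^ 2 *
              (quintic (-q ^ 2) * quintic ((-q ^ 2) ^ 3)))) := by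
        rw [fifteen_sq hq, quintic_mul_quintic_cube_sq hq]; ring
    _ = fifteenRatio (-q ^ 2) := mul_div_mul_left _ _ (by positivity)

lemma fifteen_pow_four (hq : IsNome q) :
    fifteen q ^ 4 = (phiPair 1 15 q * phiPair 3 5 q) ^ 2 * (quintic q * quintic (q ^ 3)) := by
  have denom_pos {q : ℝ} (hq : IsNome q) :
      0 < (phiPair 1 15 q * phiPair 3 5 q) ^ 2 * (quintic q * quintic (q ^ 3)) :=
    mul_pos (pow_pos (mul_pos (phiPair_pos hq 1 15) (phiPair_pos hq 3 5)) 2)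
      (quintic_mul_quintic_cube_pos hq)
  refine (div_eq_one_iff_eq (denom_pos hq).ne').mp ?_
  exact IsNome.eq_one_of_sq_eq_neg_sq (R := fifteenRatio) tendsto_fifteenRatio
    (fun q hq => div_nonneg (by positivity) (denom_pos hq).le) (fun q hq => fifteenRatio_sq hq) hq

end Fifteen

section Multiplier

variable {q : ℝ}

/-- The multiplier of degree five, `φ(q)² / φ(q⁵)²`. -/
noncomputable def multiplier (q : ℝ) : ℝ :=
  (phi q / phi (q ^ 5)) ^ 2

lemma multiplier_ne_one (hq : IsNome q) : multiplier q ≠ 1 := by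
  intro h
  refine quintic_ne_zero hq ?_
  rw [multiplier, div_pow, div_eq_one_iff_eq (pow_ne_zero 2 (phi_pos (hq.pow 5)).ne')] at h
  rw [quintic, h, sub_self, zero_mul]

lemma multiplier_sub_sq (hq : IsNome q) :
    (multiplier (-q ^ 2) - multiplier q) ^ 2 =
      multiplier q * (multiplier (-q ^ 2) - 1) * (multiplier (-q ^ 2) - 5) := by
  have h := phi_sub_mul_neg hq
  have phi_five_ne_zero := (phi_pos (hq.pow 5)).ne'
  have phi_neg_five_ne_zero := (phi_pos (hq.pow 5).neg).ne'
  rw [← phi_mul_phi_neg hq, ← phi_pow_mul_phi_neg_pow hq 5] at h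
  rw [multiplier, (by ring : (-q ^ 2) ^ 5 = -q ^ (2 * 5)), div_pow, ← phi_mul_phi_neg hq,
    ← phi_pow_mul_phi_neg_pow hq 5, multiplier]
  field_simp
  linear_combination -phi q ^ 2 * h

lemma multiplier_sub_pow_four (hq : IsNome q) :
    (multiplier q - multiplier (q ^ 3)) ^ 4 =
      multiplier q * multiplier (q ^ 3) * ((multiplier q - 1) * (5 - multiplier q)) *
        ((multiplier (q ^ 3) - 1) * (5 - multiplier (q ^ 3))) := by
  have h := fifteen_pow_four hq
  have phi_five_ne_zero := (phi_pos (hq.pow 5)).ne'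
  have phi_fifteen_ne_zero := (phi_pos (hq.pow 15)).ne'
  simp only [fifteen, phiPair, quintic, pow_one, ← pow_mul, Nat.reduceMul] at h
  simp only [multiplier, ← pow_mul, Nat.reduceMul]
  field_simp
  linear_combination h

end Multiplier

section Elimination

variable {R : Type*} [CommRing R]

lemma quadratic_resultant_eq_zero {a b c s t y : R}
    (quadratic : a * y ^ 2 + b * y + c = 0)
    (linear : s * y + t = 0) : a * t ^ 2 - b * t * s + c * s ^ 2 = 0 := by
  linear_combination s ^ 2 * quadratic + (a * (t - s * y) - b * s) * linear

/-- The coefficient of `y` in the remainder of `(1 - v)³` times the degree fifteen relation between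
`y` and `z` after division by the degree five relation between `y` and `v`. -/
def remainderSlope (v z : R) : R :=
  -(25 * z - 30 * z ^ 2 + 9 * z ^ 3)
    - (90 * z - 60 * z ^ 2 + 2 * z ^ 3) * v
    - (40 - 120 * z + 120 * z ^ 2 - 16 * z ^ 3) * v ^ 2
    - (16 + 14 * z - 36 * z ^ 2 + 6 * z ^ 3) * v ^ 3
    - (8 - 9 * z + 6 * z ^ 2 - z ^ 3) * v ^ 4

/-- The constant coefficient of the remainder described at `remainderSlope`. -/
def remainderConst (v z : R) : R :=
  z ^ 4
    + (150 * z - 150 * z ^ 2 + 30 * z ^ 3 - 3 * z ^ 4) * v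
    + (25 - 150 * z + 210 * z ^ 2 - 46 * z ^ 3 + 3 * z ^ 4) * v ^ 2
    + (45 - 6 * z - 66 * z ^ 2 + 18 * z ^ 3 - z ^ 4) * v ^ 3
    - (5 - 6 * z - 6 * z ^ 2 + 2 * z ^ 3) * v ^ 4
    - v ^ 5

/-- The polynomial relation between `v` and `z` left after eliminating `y`. -/
def eliminant (v z : R) : R :=
  z ^ 8
    - (3125 * z ^ 2 - 7500 * z ^ 3 + 6750 * z ^ 4 - 3100 * z ^ 5 + 825 * z ^ 6 - 96 * z ^ 7
      + 4 * z ^ 8) * v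
    + (6250 * z ^ 2 - 15000 * z ^ 3 + 12450 * z ^ 4 - 4680 * z ^ 5 + 1146 * z ^ 6 - 144 * z ^ 7
      + 6 * z ^ 8) * v ^ 2
    - (4875 * z ^ 2 - 12900 * z ^ 3 + 10530 * z ^ 4 - 2868 * z ^ 5 + 479 * z ^ 6 - 64 * z ^ 7
      + 4 * z ^ 8) * v ^ 3
    + (625 - 2000 * z + 4700 * z ^ 2 - 8480 * z ^ 3 + 6748 * z ^ 4 - 1696 * z ^ 5 + 188 * z ^ 6
      - 16 * z ^ 7 + z ^ 8) * v ^ 4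
    - (500 - 1600 * z + 2395 * z ^ 2 - 2868 * z ^ 3 + 2106 * z ^ 4 - 516 * z ^ 5
      + 39 * z ^ 6) * v ^ 5
    + (150 - 720 * z + 1146 * z ^ 2 - 936 * z ^ 3 + 498 * z ^ 4 - 120 * z ^ 5
      + 10 * z ^ 6) * v ^ 6
    - (20 - 96 * z + 165 * z ^ 2 - 124 * z ^ 3 + 54 * z ^ 4 - 12 * z ^ 5 + z ^ 6) * v ^ 7
    + v ^ 8

variable {K : Type*} [Field K] {v y z : K}

lemma remainder_eq_zero (hv : (y - v) ^ 2 = v * (y - 1) * (y - 5))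
    (hz : (y - z) ^ 4 = y * z * ((y - 1) * (5 - y)) * ((z - 1) * (5 - z))) :
    remainderSlope v z * y + remainderConst v z = 0 := by
  simp only [remainderSlope, remainderConst]
  -- The factor of `hv` is the quotient of the division.
  linear_combination (1 - v) ^ 3 * hz -
    (30 * z - 30 * z ^ 2 + 6 * z ^ 3 - 9 * y * z + 6 * y * z ^ 2 - y * z ^ 3 + y ^ 2
    + 5 * v - 24 * v * z + 36 * v * z ^ 2 - 8 * v * z ^ 3 - 4 * v * y + 18 * v * y * z
    - 12 * v * y * z ^ 2 + 2 * v * y * z ^ 3 - 2 * v * y ^ 2 + 10 * v ^ 2 - 6 * v ^ 2 * z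
    - 6 * v ^ 2 * z ^ 2 + 2 * v ^ 2 * z ^ 3 + 4 * v ^ 2 * y - 9 * v ^ 2 * y * z
    + 6 * v ^ 2 * y * z ^ 2 - v ^ 2 * y * z ^ 3 + v ^ 2 * y ^ 2 + v ^ 3) * hv

lemma eliminant_eq_zero (hne : v ≠ 1) (hv : (y - v) ^ 2 = v * (y - 1) * (y - 5))
    (hz : (y - z) ^ 4 = y * z * ((y - 1) * (5 - y)) * ((z - 1) * (5 - z))) :
    eliminant v z = 0 := by
  have quadratic : (1 - v) * y ^ 2 + 4 * v * y + (v ^ 2 - 5 * v) = 0 := by linear_combination hv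
  have resultant := quadratic_resultant_eq_zero quadratic (remainder_eq_zero hv hz)
  refine (mul_eq_zero.mp ?_).resolve_left (pow_ne_zero 3 (sub_ne_zero.mpr hne.symm))
  rw [← resultant, eliminant, remainderSlope, remainderConst]
  ring

end Elimination

lemma eliminant_multiplier {q : ℝ} (hq : IsNome q) :
    eliminant (multiplier (-q)) (multiplier (-q ^ 6)) = 0 := by
  have degree_five := multiplier_sub_sq hq.neg
  have degree_fifteen := multiplier_sub_pow_four (hq.pow 2).neg
  rw [neg_sq] at degree_five
  rw [(by ring : (-q ^ 2) ^ 3 = -q ^ 6)] at degree_fifteen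
  exact eliminant_eq_zero (multiplier_ne_one hq.neg) degree_five degree_fifteen

theorem stmt_0_general (q M N : ℝ) (hq : |q| < 1)
    (hM : M = phi (-q) / phi (-(q ^ 5)))
    (hN : N = phi (-(q ^ 6)) / phi (-(q ^ 30))) :
    (M ^ 8 / N ^ 8 + N ^ 8 / M ^ 8) + 96 * (M ^ 6 / N ^ 6 + N ^ 6 / M ^ 6)
      + 1146 * (M ^ 4 / N ^ 4 + N ^ 4 / M ^ 4) + 2868 * (M ^ 2 / N ^ 2 + N ^ 2 / M ^ 2)
      + (N ^ 8 + 5 ^ 4 / N ^ 8) - 16 * (N ^ 6 + 5 ^ 3 / N ^ 6)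
      + 188 * (N ^ 4 + 5 ^ 2 / N ^ 4) - 1696 * (N ^ 2 + 5 / N ^ 2)
      - 54 * (M ^ 6 + 5 ^ 3 / M ^ 6) + 498 * (M ^ 4 + 5 ^ 2 / M ^ 4)
      - 2106 * (M ^ 2 + 5 / M ^ 2)
      - 4 * (N ^ 8 / M ^ 6 + 5 * M ^ 6 / N ^ 8)
      + 6 * (N ^ 8 / M ^ 4 + 5 ^ 2 * M ^ 4 / N ^ 8)
      - 4 * (N ^ 8 / M ^ 2 + 5 ^ 3 * M ^ 2 / N ^ 8)
      - 144 * (N ^ 6 / M ^ 4 + 5 * M ^ 4 / N ^ 6)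
      + 64 * (N ^ 6 / M ^ 2 + 5 ^ 2 * M ^ 2 / N ^ 6)
      - 479 * (N ^ 4 / M ^ 2 + 5 * M ^ 2 / N ^ 4)
      - 165 * (M ^ 6 / N ^ 4 + 5 * N ^ 4 / M ^ 6)
      + 124 * (M ^ 6 / N ^ 2 + 5 ^ 2 * N ^ 2 / M ^ 6)
      - 936 * (M ^ 4 / N ^ 2 + 5 * N ^ 2 / M ^ 4)
      + 10 * (M ^ 4 * N ^ 4 + 5 ^ 4 / (M ^ 4 * N ^ 4))
      + 516 * (M ^ 2 * N ^ 2 + 5 ^ 2 / (M ^ 2 * N ^ 2))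
      - 39 * (M ^ 2 * N ^ 4 + 5 ^ 3 / (M ^ 2 * N ^ 4))
      - 120 * (M ^ 4 * N ^ 2 + 5 ^ 3 / (M ^ 4 * N ^ 2))
      + 12 * (M ^ 6 * N ^ 2 + 5 ^ 4 / (M ^ 6 * N ^ 2))
      - (M ^ 6 * N ^ 4 + 5 ^ 5 / (M ^ 6 * N ^ 4)) + 6748 = 0 := by
  rcases eq_or_ne q 0 with rfl | hq0
  · obtain rfl : M = 1 := by simpa [phi_zero] using hM
    obtain rfl : N = 1 := by simpa [phi_zero] using hN
    norm_num
  have hnome : IsNome q := ⟨hq0, hq⟩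
  have M_ne_zero : M ≠ 0 :=
    hM ▸ (div_pos (phi_pos hnome.neg) (phi_pos (hnome.pow 5).neg)).ne'
  have N_ne_zero : N ≠ 0 :=
    hN ▸ (div_pos (phi_pos (hnome.pow 6).neg) (phi_pos (hnome.pow 30).neg)).ne'
  have h := eliminant_multiplier hnome
  rw [multiplier, multiplier, Odd.neg_pow (by decide), Odd.neg_pow (by decide), ← pow_mul, ← hM,
    ← hN, eliminant] at h
  field_simp
  linear_combination h

theorem stmt_0 (q M N : ℝ) (hq0 : 0 < q) (hq1 : q < 1)
    (hM : M = phi (-q) / phi (-(q ^ 5)))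
    (hN : N = phi (-(q ^ 6)) / phi (-(q ^ 30))) :
    (M ^ 8 / N ^ 8 + N ^ 8 / M ^ 8) + 96 * (M ^ 6 / N ^ 6 + N ^ 6 / M ^ 6)
      + 1146 * (M ^ 4 / N ^ 4 + N ^ 4 / M ^ 4) + 2868 * (M ^ 2 / N ^ 2 + N ^ 2 / M ^ 2)
      + (N ^ 8 + 5 ^ 4 / N ^ 8) - 16 * (N ^ 6 + 5 ^ 3 / N ^ 6)
      + 188 * (N ^ 4 + 5 ^ 2 / N ^ 4) - 1696 * (N ^ 2 + 5 / N ^ 2)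
      - 54 * (M ^ 6 + 5 ^ 3 / M ^ 6) + 498 * (M ^ 4 + 5 ^ 2 / M ^ 4)
      - 2106 * (M ^ 2 + 5 / M ^ 2)
      - 4 * (N ^ 8 / M ^ 6 + 5 * M ^ 6 / N ^ 8)
      + 6 * (N ^ 8 / M ^ 4 + 5 ^ 2 * M ^ 4 / N ^ 8)
      - 4 * (N ^ 8 / M ^ 2 + 5 ^ 3 * M ^ 2 / N ^ 8)
      - 144 * (N ^ 6 / M ^ 4 + 5 * M ^ 4 / N ^ 6)
      + 64 * (N ^ 6 / M ^ 2 + 5 ^ 2 * M ^ 2 / N ^ 6)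
      - 479 * (N ^ 4 / M ^ 2 + 5 * M ^ 2 / N ^ 4)
      - 165 * (M ^ 6 / N ^ 4 + 5 * N ^ 4 / M ^ 6)
      + 124 * (M ^ 6 / N ^ 2 + 5 ^ 2 * N ^ 2 / M ^ 6)
      - 936 * (M ^ 4 / N ^ 2 + 5 * N ^ 2 / M ^ 4)
      + 10 * (M ^ 4 * N ^ 4 + 5 ^ 4 / (M ^ 4 * N ^ 4))
      + 516 * (M ^ 2 * N ^ 2 + 5 ^ 2 / (M ^ 2 * N ^ 2))
      - 39 * (M ^ 2 * N ^ 4 + 5 ^ 3 / (M ^ 2 * N ^ 4))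
      - 120 * (M ^ 4 * N ^ 2 + 5 ^ 3 / (M ^ 4 * N ^ 2))
      + 12 * (M ^ 6 * N ^ 2 + 5 ^ 4 / (M ^ 6 * N ^ 2))
      - (M ^ 6 * N ^ 4 + 5 ^ 5 / (M ^ 6 * N ^ 4)) + 6748 = 0 := by
  exact stmt_0_general q M N (by rwa [abs_of_pos hq0]) hM hN
end

section
/- Let 0 < q < 1 and set V := ψ^2(q)/(q ψ^2(q^5)). If V > 1, then f^2(-q) f^2(-q^2) / (q f^2(-q^5) f^2(-q^10)) = V(V-5)/(V-1). -/
open Real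

/-!
The series `4 ψ(q)²` runs over the odd Gaussian integers. Split it by residue modulo `2 + i`:
multiplication by `i` permutes the four nonzero residue classes, so these contribute equally, while
the zero class contributes `4 q ψ(q⁵)²`. Hence `ψ(q)² - q ψ(q⁵)²` is the contribution of one nonzero
class, which is a product of two theta series in `q⁵`. Twisting by a primitive fifth root of unity
likewise turns `ψ(q)² - 5 q ψ(q⁵)²` into a product of two theta series in `q`. By the Jacobi triple
product, with `f_n = f(-q^n)`,
`ψ(q)² - q ψ(q⁵)² = f₂ f₅³ / (f₁ f₁₀)`, `ψ(q)² - 5 q ψ(q⁵)² = f₁³ f₁₀ / (f₂ f₅)` and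
`ψ(q) = f₂² / f₁`. The left-hand sides of the first two are `q ψ(q⁵)² (V - 1)` and
`q ψ(q⁵)² (V - 5)`.
-/

open Filter Topology Finset

section QPochhammer

variable {𝕜 : Type*} [NormedField 𝕜]

/-- The infinite `q`-Pochhammer symbol `(a; q)_∞ = ∏_{i ≥ 0} (1 - a q^i)`. -/
noncomputable def qPochhammer (a q : 𝕜) : 𝕜 := ∏' i : ℕ, (1 - a * q ^ i)

/-- Euler's product `(q; q)_∞ = ∏_{i ≥ 1} (1 - q^i)`, the product side of `fneg`. -/
noncomputable def eulerProd (q : 𝕜) : 𝕜 := qPochhammer q q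

lemma norm_pow_lt_one {q : 𝕜} (hq : ‖q‖ < 1) {n : ℕ} (hn : n ≠ 0) : ‖q ^ n‖ < 1 := by
  rw [norm_pow]
  exact pow_lt_one₀ (norm_nonneg q) hq hn

lemma qPochhammer_eq_zero (a q : 𝕜) {i : ℕ} (h : a * q ^ i = 1) : qPochhammer a q = 0 :=
  tprod_of_exists_eq_zero ⟨i, by rw [h, sub_self]⟩

lemma summable_norm_neg_mul_pow (a : 𝕜) {q : 𝕜} (hq : ‖q‖ < 1) :
    Summable fun i : ℕ ↦ ‖-(a * q ^ i)‖ := by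
  simpa only [norm_neg, norm_mul, norm_pow] using
    (summable_geometric_of_lt_one (norm_nonneg q) hq).mul_left ‖a‖

variable [CompleteSpace 𝕜]

lemma multipliable_one_sub_mul_pow (a : 𝕜) {q : 𝕜} (hq : ‖q‖ < 1) :
    Multipliable fun i : ℕ ↦ 1 - a * q ^ i := by
  simpa only [sub_eq_add_neg] using
    multipliable_one_add_of_summable (summable_norm_neg_mul_pow a hq)

lemma qPochhammer_ne_zero {a q : 𝕜} (hq : ‖q‖ < 1) (h : ∀ i : ℕ, a * q ^ i ≠ 1) :
    qPochhammer a q ≠ 0 := by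
  simpa only [qPochhammer, sub_eq_add_neg] using
    tprod_one_add_ne_zero_of_summable (f := fun i : ℕ ↦ -(a * q ^ i))
      (fun i ↦ by rw [← sub_eq_add_neg]; exact sub_ne_zero.mpr (h i).symm)
      (summable_norm_neg_mul_pow a hq)

lemma eulerProd_ne_zero {q : 𝕜} (hq : ‖q‖ < 1) : eulerProd q ≠ 0 := by
  refine qPochhammer_ne_zero hq fun i h ↦ ?_
  rw [← pow_succ'] at h
  simpa [h] using norm_pow_lt_one hq i.succ_ne_zero

lemma qPochhammer_eq_one_sub_mul (a : 𝕜) {q : 𝕜} (hq : ‖q‖ < 1) :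
    qPochhammer a q = (1 - a) * qPochhammer (a * q) q := by
  have hshift : (fun i : ℕ ↦ 1 - a * q ^ (i + 1)) = fun i ↦ 1 - a * q * q ^ i := by
    funext i
    ring
  have h := tprod_eq_zero_mul' (f := fun i : ℕ ↦ 1 - a * q ^ i)
    (by rw [hshift]; exact multipliable_one_sub_mul_pow _ hq)
  rwa [hshift, pow_zero, mul_one] at h

lemma qPochhammer_mul_qPochhammer_neg (a : 𝕜) {q : 𝕜} (hq : ‖q‖ < 1) :
    qPochhammer a q * qPochhammer (-a) q = qPochhammer (a ^ 2) (q ^ 2) := by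
  rw [qPochhammer, qPochhammer, ← (multipliable_one_sub_mul_pow a hq).tprod_mul
    (multipliable_one_sub_mul_pow (-a) hq)]
  exact tprod_congr fun i ↦ by ring

lemma eulerProd_mul_qPochhammer_neg {q : 𝕜} (hq : ‖q‖ < 1) :
    eulerProd q * qPochhammer (-q) q = eulerProd (q ^ 2) :=
  qPochhammer_mul_qPochhammer_neg q hq

lemma prod_range_qPochhammer_mul_pow (a : 𝕜) {q : 𝕜} (hq : ‖q‖ < 1) {n : ℕ} (hn : n ≠ 0) :
    ∏ j ∈ range n, qPochhammer (a * q ^ j) (q ^ n) = qPochhammer a q := by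
  have : NeZero n := ⟨hn⟩
  rw [← Fin.prod_univ_eq_prod_range fun j ↦ qPochhammer (a * q ^ j) (q ^ n)]
  have h := ((Nat.divModEquiv n).trans (Equiv.prodComm _ _)).symm.hasProd_iff.mpr
    (multipliable_one_sub_mul_pow a hq).hasProd
  refine (hasProd_fintype _).unique (h.prod_fiberwise fun j ↦ ?_)
  convert (multipliable_one_sub_mul_pow (a * q ^ (j : ℕ)) (norm_pow_lt_one hq hn)).hasProd using 2
  · simp only [Function.comp, Equiv.symm_trans_apply, Equiv.prodComm_symm, Equiv.prodComm_apply,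
      Prod.swap_prod_mk, Nat.divModEquiv_symm_apply]
    ring
  · rfl

lemma prod_range_one_sub_pow_mul {R : Type*} [CommRing R] [IsDomain R] {ζ : R} {n : ℕ}
    (hζ : IsPrimitiveRoot ζ n) (hn : n ≠ 0) (x : R) :
    ∏ k ∈ range n, (1 - ζ ^ k * x) = 1 - x ^ n := by
  have h := congrArg (Polynomial.eval 1)
    (X_pow_sub_C_eq_prod hζ (Nat.pos_of_ne_zero hn) (rfl : x ^ n = x ^ n))
  simpa [Polynomial.eval_prod] using h.symm

lemma prod_range_qPochhammer_root_mul {ζ : 𝕜} {n : ℕ} (hζ : IsPrimitiveRoot ζ n) (hn : n ≠ 0)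
    (a : 𝕜) {q : 𝕜} (hq : ‖q‖ < 1) :
    ∏ k ∈ range n, qPochhammer (ζ ^ k * a) q = qPochhammer (a ^ n) (q ^ n) := by
  simp only [qPochhammer]
  rw [← Multipliable.tprod_finsetProd fun k _ ↦ multipliable_one_sub_mul_pow (ζ ^ k * a) hq]
  refine tprod_congr fun i ↦ ?_
  simp only [mul_assoc, prod_range_one_sub_pow_mul hζ hn]
  ring

lemma tendsto_qPochhammer_pow_succ {q : 𝕜} (hq : ‖q‖ < 1) :
    Tendsto (fun n : ℕ ↦ qPochhammer (q ^ (n + 1)) q) atTop (𝓝 1) := by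
  have h := tendsto_tprod_one_add_of_dominated_convergence (𝓕 := atTop) (g := fun _ : ℕ ↦ (0 : 𝕜))
    (f := fun n i ↦ -(q ^ (n + 1) * q ^ i)) (bound := fun i ↦ ‖q‖ ^ i)
    (summable_geometric_of_lt_one (norm_nonneg q) hq) (fun i ↦ ?_) (.of_forall fun n i ↦ ?_)
  · simpa only [qPochhammer, sub_eq_add_neg, add_zero, tprod_one] using h
  · simpa using (((tendsto_pow_atTop_nhds_zero_of_norm_lt_one hq).comp
      (tendsto_add_atTop_nat 1)).mul_const (q ^ i)).neg
  · rw [norm_neg, norm_mul, norm_pow, norm_pow]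
    exact mul_le_of_le_one_left (by positivity) (pow_le_one₀ (norm_nonneg q) hq.le)

end QPochhammer

/-- The triangular number `j (j + 1) / 2` of an integer. -/
def tri (j : ℤ) : ℤ := j * (j + 1) / 2

lemma two_mul_tri (j : ℤ) : 2 * tri j = j * (j + 1) :=
  Int.two_mul_ediv_two_of_even (Int.even_mul_succ_self j)

lemma tri_natCast (n : ℕ) : tri n = (n * (n + 1) / 2 : ℕ) := by
  rw [tri]
  norm_cast

lemma tri_add_one (j : ℤ) : tri (j + 1) = tri j + (j + 1) := by
  have h := two_mul_tri j
  have h' := two_mul_tri (j + 1)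
  linarith

lemma tri_sub_one (j : ℤ) : tri (j - 1) = tri j - j := by
  have h := tri_add_one (j - 1)
  rw [sub_add_cancel] at h
  linarith

lemma tri_neg_add_one (j : ℤ) : tri (-(j + 1)) = tri j := by
  have h := two_mul_tri j
  have h' := two_mul_tri (-(j + 1))
  linarith

section TripleProduct

variable {𝕜 : Type*} [NormedField 𝕜]

/-- The bilateral theta series `∑_j q^(j(j+1)/2) z^j`, which is `f(zq, z⁻¹)` in Ramanujan's
two-variable notation. -/
noncomputable def thetaSeries (q z : 𝕜) : 𝕜 := ∑' j : ℤ, q ^ tri j * z ^ j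

lemma summable_norm_pow_tri_mul_pow {q : 𝕜} (hq0 : q ≠ 0) (hq : ‖q‖ < 1) {w : 𝕜} (hw : w ≠ 0) :
    Summable fun n : ℕ ↦ ‖q ^ tri n * w ^ n‖ := by
  have hterm (n : ℕ) : q ^ tri n * w ^ n ≠ 0 :=
    mul_ne_zero (zpow_ne_zero _ hq0) (pow_ne_zero _ hw)
  refine summable_of_ratio_test_tendsto_lt_one (l := 0) one_pos
    (.of_forall fun n ↦ norm_ne_zero_iff.mpr (hterm n)) ?_
  have h : Tendsto (fun n : ℕ ↦ ‖w‖ * ‖q‖ ^ (n + 1)) atTop (𝓝 (‖w‖ * 0)) :=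
    ((tendsto_pow_atTop_nhds_zero_of_lt_one (norm_nonneg q) hq).comp
      (tendsto_add_atTop_nat 1)).const_mul _
  rw [mul_zero] at h
  refine h.congr fun n ↦ ?_
  have hsucc : q ^ tri (n + 1 : ℕ) * w ^ (n + 1) = w * q ^ (n + 1) * (q ^ tri n * w ^ n) := by
    have hexp : q ^ tri (n + 1 : ℕ) = q ^ tri n * q ^ (n + 1) := by
      rw [Nat.cast_succ, tri_add_one, zpow_add₀ hq0, ← Nat.cast_succ, zpow_natCast]
    rw [hexp]
    ring
  rw [norm_norm, norm_norm, ← norm_div, ← norm_pow, ← norm_mul, hsucc, mul_div_cancel_right₀ _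
    (hterm n)]

lemma summable_norm_thetaSeries {q : 𝕜} (hq0 : q ≠ 0) (hq : ‖q‖ < 1) {z : 𝕜} (hz : z ≠ 0) :
    Summable fun j : ℤ ↦ ‖q ^ tri j * z ^ j‖ := by
  refine Summable.of_nat_of_neg_add_one
    (by simpa only [zpow_natCast] using summable_norm_pow_tri_mul_pow hq0 hq hz) ?_
  refine ((summable_norm_pow_tri_mul_pow hq0 hq (inv_ne_zero hz)).mul_left ‖z⁻¹‖).congr fun n ↦ ?_
  rw [← norm_mul, tri_neg_add_one, zpow_neg, zpow_add_one₀ hz, zpow_natCast, inv_pow, mul_inv]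
  ring_nf

/-- The tail `∏_{i > m} (1 - q^i)` of Euler's product. It vanishes for `m < 0`, which makes the
sums in the finite triple product identity finite. -/
noncomputable def eulerTail (q : 𝕜) (m : ℤ) : 𝕜 := qPochhammer (q ^ (m + 1)) q

lemma eulerTail_zero (q : 𝕜) : eulerTail q 0 = eulerProd q := by
  rw [eulerTail, zero_add, zpow_one, eulerProd]

lemma eulerTail_of_neg {q : 𝕜} (hq0 : q ≠ 0) {m : ℤ} (hm : m < 0) : eulerTail q m = 0 := by
  refine qPochhammer_eq_zero _ _ (i := (-(m + 1)).toNat) ?_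
  rw [← zpow_natCast, ← zpow_add₀ hq0, Int.toNat_of_nonneg (by omega), add_neg_cancel, zpow_zero]

/-- The `j`-th term of the `N`-th finite triple product sum, without its constant factor. It tends
to the `j`-th term of `thetaSeries q z` as `N → ∞`. -/
noncomputable def finiteThetaTerm (q z : 𝕜) (N : ℕ) (j : ℤ) : 𝕜 :=
  eulerTail q (N + j) * eulerTail q (N - j) * (q ^ tri j * z ^ j)

variable [CompleteSpace 𝕜]

lemma eulerTail_sub_one {q : 𝕜} (hq0 : q ≠ 0) (hq : ‖q‖ < 1) (m : ℤ) :
    eulerTail q (m - 1) = (1 - q ^ m) * eulerTail q m := by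
  rw [eulerTail, sub_add_cancel, qPochhammer_eq_one_sub_mul _ hq, ← zpow_add_one₀ hq0, eulerTail]

lemma tendsto_eulerTail {q : 𝕜} (hq : ‖q‖ < 1) : Tendsto (eulerTail q) atTop (𝓝 1) := by
  rw [← Nat.map_cast_int_atTop, tendsto_map'_iff]
  exact (tendsto_qPochhammer_pow_succ hq).congr fun n ↦ by
    rw [Function.comp, eulerTail, ← Nat.cast_succ, zpow_natCast]

lemma exists_norm_eulerTail_le {q : 𝕜} (hq0 : q ≠ 0) (hq : ‖q‖ < 1) :
    ∃ C, ∀ m, ‖eulerTail q m‖ ≤ C := by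
  obtain ⟨C, hC⟩ :=
    ((tendsto_eulerTail hq).comp tendsto_natCast_atTop_atTop).norm.bddAbove_range
  have hC' (n : ℕ) : ‖eulerTail q n‖ ≤ C := hC ⟨n, rfl⟩
  refine ⟨C, fun m ↦ ?_⟩
  rcases lt_or_ge m 0 with hm | hm
  · rw [eulerTail_of_neg hq0 hm, norm_zero]
    exact (norm_nonneg _).trans (hC' 0)
  · lift m to ℕ using hm
    exact hC' m

lemma finiteThetaTerm_succ {q z : 𝕜} (hq0 : q ≠ 0) (hq : ‖q‖ < 1) (hz : z ≠ 0) (N : ℕ) (j : ℤ) :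
    (1 - q ^ (2 * N + 1)) * (1 - q ^ (2 * N + 2)) * finiteThetaTerm q z (N + 1) j =
      (1 + q ^ (2 * N + 1)) * finiteThetaTerm q z N j
        + z * q ^ (N + 1) * finiteThetaTerm q z N (j - 1)
        + z⁻¹ * q ^ N * finiteThetaTerm q z N (j + 1) := by
  have h₁ := eulerTail_sub_one hq0 hq (N + 1 + j)
  have h₂ := eulerTail_sub_one hq0 hq (N + 1 - j)
  have h₃ := eulerTail_sub_one hq0 hq (N + j)
  have h₄ := eulerTail_sub_one hq0 hq (N - j)
  rw [show (N + 1 + j - 1 : ℤ) = N + j by ring] at h₁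
  rw [show (N + 1 - j - 1 : ℤ) = N - j by ring] at h₂
  simp only [finiteThetaTerm, Nat.cast_succ]
  rw [show (N + (j - 1) : ℤ) = N + j - 1 by ring, show (N - (j - 1) : ℤ) = N + 1 - j by ring,
    show (N + (j + 1) : ℤ) = N + 1 + j by ring, show (N - (j + 1) : ℤ) = N - j - 1 by ring,
    h₃, h₄, h₁, h₂, tri_add_one, tri_sub_one]
  simp only [zpow_add₀ hq0, zpow_sub₀ hq0, zpow_add₀ hz, zpow_sub₀ hz, zpow_natCast, zpow_one]
  have hj : q ^ j ≠ 0 := zpow_ne_zero _ hq0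
  field_simp
  ring

lemma hasSum_finiteThetaTerm {q z : 𝕜} (hq0 : q ≠ 0) (hq : ‖q‖ < 1) (hz : z ≠ 0) (N : ℕ) :
    HasSum (fun j ↦ (∏ i ∈ range (2 * N), (1 - q * q ^ i)) * finiteThetaTerm q z N j)
      (eulerProd q ^ 2 * ∏ i ∈ range N, (1 + z * q ^ (i + 1)) * (1 + z⁻¹ * q ^ i)) := by
  induction N with
  | zero =>
    convert hasSum_single (0 : ℤ) fun j hj ↦ ?_ using 1
    · simp [finiteThetaTerm, eulerTail_zero, tri, sq]
    · rcases hj.lt_or_gt with h | h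
      · simp [finiteThetaTerm, eulerTail_of_neg hq0 h]
      · simp [finiteThetaTerm, eulerTail_of_neg hq0 (neg_neg_of_pos h)]
  | succ N ih =>
    have ih_sub := (Equiv.subRight (1 : ℤ)).hasSum_iff.mpr ih
    have ih_add := (Equiv.addRight (1 : ℤ)).hasSum_iff.mpr ih
    convert ((ih.mul_left (1 + q ^ (2 * N + 1))).add (ih_sub.mul_left (z * q ^ (N + 1)))).add
      (ih_add.mul_left (z⁻¹ * q ^ N)) using 1
    · rfl
    · funext j
      simp only [Function.comp, Equiv.subRight_apply, Equiv.coe_addRight]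
      rw [show 2 * (N + 1) = 2 * N + 1 + 1 by ring, prod_range_succ, prod_range_succ]
      linear_combination (∏ i ∈ range (2 * N), (1 - q * q ^ i)) * finiteThetaTerm_succ hq0 hq hz N j
    · rw [prod_range_succ]
      have hzz : z * z⁻¹ = 1 := mul_inv_cancel₀ hz
      linear_combination eulerProd q ^ 2 * (∏ i ∈ range N, (1 + z * q ^ (i + 1)) *
        (1 + z⁻¹ * q ^ i)) * q ^ (2 * N + 1) * hzz

lemma tendsto_tsum_finiteThetaTerm {q z : 𝕜} (hq0 : q ≠ 0) (hq : ‖q‖ < 1) (hz : z ≠ 0) :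
    Tendsto (fun N ↦ ∑' j, finiteThetaTerm q z N j) atTop (𝓝 (thetaSeries q z)) := by
  obtain ⟨C, hC⟩ := exists_norm_eulerTail_le hq0 hq
  have hC0 : 0 ≤ C := (norm_nonneg _).trans (hC 0)
  refine tendsto_tsum_of_dominated_convergence
    ((summable_norm_thetaSeries hq0 hq hz).mul_left (C * C)) (fun j ↦ ?_) (.of_forall fun N j ↦ ?_)
  · have h₁ := (tendsto_eulerTail hq).comp (tendsto_atTop_add_const_right atTop j
      (tendsto_natCast_atTop_atTop (R := ℤ)))
    have h₂ := (tendsto_eulerTail hq).comp (tendsto_atTop_add_const_right atTop (-j)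
      (tendsto_natCast_atTop_atTop (R := ℤ)))
    simpa only [finiteThetaTerm, Function.comp_def, ← sub_eq_add_neg, one_mul] using
      (h₁.mul h₂).mul_const (q ^ tri j * z ^ j)
  · rw [finiteThetaTerm, norm_mul, norm_mul]
    gcongr <;> exact hC _

/-- The **Jacobi triple product identity**. -/
theorem thetaSeries_eq_qPochhammer {q z : 𝕜} (hq0 : q ≠ 0) (hq : ‖q‖ < 1) (hz : z ≠ 0) :
    thetaSeries q z = eulerProd q * qPochhammer (-(z * q)) q * qPochhammer (-z⁻¹) q := by
  have hL := (((multipliable_one_sub_mul_pow q hq).tendsto_prod_tprod_nat).comp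
    (tendsto_id.const_mul_atTop' two_pos)).mul (tendsto_tsum_finiteThetaTerm hq0 hq hz)
  have hR := ((((multipliable_one_sub_mul_pow (-(z * q)) hq).tendsto_prod_tprod_nat)).mul
    ((multipliable_one_sub_mul_pow (-z⁻¹) hq).tendsto_prod_tprod_nat)).const_mul (eulerProd q ^ 2)
  have h := tendsto_nhds_unique (hL.congr fun N ↦ ?_) hR
  · refine mul_left_cancel₀ (eulerProd_ne_zero hq) ?_
    rw [eulerProd, qPochhammer, h, eulerProd]
    simp only [qPochhammer]
    ring
  · rw [Function.comp, ← tsum_mul_left, id, (hasSum_finiteThetaTerm hq0 hq hz N).tsum_eq,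
      ← prod_mul_distrib]
    exact congrArg _ (prod_congr rfl fun i _ ↦ by ring)

end TripleProduct

section EtaProducts

variable {𝕜 : Type*} [NormedField 𝕜] [CompleteSpace 𝕜]

/-- The **pentagonal number theorem**. -/
theorem tsum_pentagonal_eq_eulerProd {q : 𝕜} (hq0 : q ≠ 0) (hq : ‖q‖ < 1) :
    ∑' n : ℤ, (-1 : 𝕜) ^ n * q ^ (n * (3 * n - 1) / 2) = eulerProd q := by
  have hseries : ∑' n : ℤ, (-1 : 𝕜) ^ n * q ^ (n * (3 * n - 1) / 2)
      = thetaSeries (q ^ 3) (-(q ^ 2)⁻¹) := by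
    refine tsum_congr fun n ↦ ?_
    have htri := two_mul_tri n
    rw [show n * (3 * n - 1) / 2 = 3 * tri n - 2 * n by
      rw [show n * (3 * n - 1) = 2 * (3 * tri n - 2 * n) by linarith]; omega]
    rw [neg_eq_neg_one_mul (q ^ 2)⁻¹, mul_zpow, inv_zpow, zpow_sub₀ hq0, zpow_mul, zpow_mul]
    norm_cast
    ring
  have hdissect := prod_range_qPochhammer_mul_pow q hq three_ne_zero
  simp only [prod_range_succ, range_zero, prod_empty, one_mul] at hdissect
  rw [hseries, thetaSeries_eq_qPochhammer (pow_ne_zero 3 hq0) (norm_pow_lt_one hq three_ne_zero)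
    (neg_ne_zero.mpr (inv_ne_zero (pow_ne_zero 2 hq0))), inv_neg, inv_inv, neg_neg,
    show -(-(q ^ 2)⁻¹ * q ^ 3) = q by field_simp, eulerProd, eulerProd, ← hdissect]
  ring_nf

theorem thetaSeries_eq_one_add_inv_mul {q z : 𝕜} (hq0 : q ≠ 0) (hq : ‖q‖ < 1) (hz : z ≠ 0) :
    thetaSeries q z =
      (1 + z⁻¹) * eulerProd q * qPochhammer (-(z * q)) q * qPochhammer (-(z⁻¹ * q)) q := by
  rw [thetaSeries_eq_qPochhammer hq0 hq hz, qPochhammer_eq_one_sub_mul (-z⁻¹) hq, neg_mul]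
  ring

lemma thetaSeries_one_mul_eulerProd {q : 𝕜} (hq0 : q ≠ 0) (hq : ‖q‖ < 1) :
    thetaSeries q 1 * eulerProd q = 2 * eulerProd (q ^ 2) ^ 2 := by
  rw [thetaSeries_eq_one_add_inv_mul hq0 hq one_ne_zero, ← eulerProd_mul_qPochhammer_neg hq,
    inv_one, one_mul]
  ring

lemma thetaSeries_one_eq_two_mul_tsum {q : 𝕜} (hq0 : q ≠ 0) (hq : ‖q‖ < 1) :
    thetaSeries q 1 = 2 * ∑' n : ℕ, q ^ (n * (n + 1) / 2) := by
  have hnonneg : Summable fun n : ℕ ↦ q ^ tri n := by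
    simpa using (summable_norm_pow_tri_mul_pow hq0 hq one_ne_zero).of_norm
  have hneg : (fun n : ℕ ↦ q ^ tri (-(n + 1))) = fun n : ℕ ↦ q ^ tri n :=
    funext fun n ↦ by rw [tri_neg_add_one]
  simp only [thetaSeries, one_zpow, mul_one]
  rw [tsum_of_nat_of_neg_add_one (f := fun j ↦ q ^ tri j) hnonneg (by rwa [hneg]), hneg, ← two_mul]
  simp only [tri_natCast, zpow_natCast]

lemma thetaSeries_pow_five_mul_eulerProd {q : 𝕜} (hq0 : q ≠ 0) (hq : ‖q‖ < 1) :
    thetaSeries (q ^ 5) q⁻¹ * thetaSeries (q ^ 5) (q ^ 2)⁻¹ * (eulerProd q * eulerProd (q ^ 10))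
      = eulerProd (q ^ 2) * eulerProd (q ^ 5) ^ 3 := by
  have hq5 : ‖q ^ 5‖ < 1 := norm_pow_lt_one hq (by norm_num)
  have hdissect := prod_range_qPochhammer_mul_pow (-q) hq (n := 5) (by norm_num)
  simp only [prod_range_succ, range_zero, prod_empty, one_mul] at hdissect
  rw [thetaSeries_eq_qPochhammer (pow_ne_zero 5 hq0) hq5 (inv_ne_zero hq0),
    thetaSeries_eq_qPochhammer (pow_ne_zero 5 hq0) hq5 (inv_ne_zero (pow_ne_zero 2 hq0)),
    show q ^ 10 = (q ^ 5) ^ 2 by ring, ← eulerProd_mul_qPochhammer_neg hq,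
    ← eulerProd_mul_qPochhammer_neg hq5, ← hdissect, inv_inv, inv_inv,
    show q⁻¹ * q ^ 5 = q ^ 4 by field_simp, show (q ^ 2)⁻¹ * q ^ 5 = q ^ 3 by field_simp]
  ring_nf

lemma thetaSeries_fifth_root_mul_eulerProd {q ζ : 𝕜} (hq0 : q ≠ 0) (hq : ‖q‖ < 1)
    (hζ : IsPrimitiveRoot ζ 5) :
    ζ ^ 2 * (thetaSeries q ζ * thetaSeries q (ζ ^ 2)⁻¹) * (eulerProd (q ^ 2) * eulerProd (q ^ 5))
      = -(eulerProd q ^ 3 * eulerProd (q ^ 10)) := by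
  have hζ0 : ζ ≠ 0 := hζ.ne_zero (by norm_num)
  have hsum : 1 + ζ + ζ ^ 2 + ζ ^ 3 + ζ ^ 4 = 0 := by
    simpa [sum_range_succ] using hζ.geom_sum_eq_zero (by norm_num)
  have hinv : ζ⁻¹ = ζ ^ 4 := inv_eq_of_mul_eq_one_right (by rw [← pow_succ', hζ.pow_eq_one])
  have hinv_sq : (ζ ^ 2)⁻¹ = ζ ^ 3 :=
    inv_eq_of_mul_eq_one_right (by rw [← pow_add, hζ.pow_eq_one])
  have hunit : ζ ^ 2 * ((1 + ζ ^ 4) * (1 + ζ ^ 2)) = -1 := by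
    linear_combination hsum + (ζ + ζ ^ 3) * hζ.pow_eq_one
  have hroots := prod_range_qPochhammer_root_mul hζ (by norm_num) (-q) hq
  simp only [prod_range_succ, range_zero, prod_empty, one_mul, pow_zero, pow_one, mul_neg,
    Odd.neg_pow (by decide : Odd 5)] at hroots
  rw [thetaSeries_eq_one_add_inv_mul hq0 hq hζ0,
    thetaSeries_eq_one_add_inv_mul hq0 hq (inv_ne_zero (pow_ne_zero 2 hζ0)),
    show q ^ 10 = (q ^ 5) ^ 2 by ring, ← eulerProd_mul_qPochhammer_neg hq,
    ← eulerProd_mul_qPochhammer_neg (norm_pow_lt_one hq (by norm_num : 5 ≠ 0)), ← hroots,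
    inv_inv, hinv, hinv_sq]
  set P := qPochhammer (-q) q * qPochhammer (-(ζ * q)) q * qPochhammer (-(ζ ^ 2 * q)) q
    * qPochhammer (-(ζ ^ 3 * q)) q * qPochhammer (-(ζ ^ 4 * q)) q
  linear_combination eulerProd q ^ 3 * eulerProd (q ^ 5) * P * hunit

end EtaProducts

section GaussianIntegers

/-- The residue class modulo `2 + i` of `((2a + 1) + (2b + 1)i) / 2`, where `(a, b)` encodes the
odd Gaussian integer `(2a + 1) + (2b + 1)i`; note `i = -2` and `1 / 2 = 3` modulo `2 + i`. -/
def residueClass (p : ℤ × ℤ) : ZMod 5 := (p.1 - 2 * p.2 + 2 : ℤ)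

/-- Multiplication by `i` on the odd Gaussian integers `(2a + 1) + (2b + 1)i`, encoded as
`(a, b)`. -/
def mulI : ℤ × ℤ ≃ ℤ × ℤ where
  toFun p := (-(p.2 + 1), p.1)
  invFun p := (p.2, -(p.1 + 1))
  left_inv p := by ext <;> simp
  right_inv p := by ext <;> simp

lemma residueClass_mulI (p : ℤ × ℤ) : residueClass (mulI p) = -2 * residueClass p := by
  have h : (5 : ZMod 5) = 0 := rfl
  simp only [residueClass, mulI, Equiv.coe_fn_mk]
  push_cast
  linear_combination (1 - (p.2 : ZMod 5)) * h

/-- The map `m + ni ↦ (2 + i)(m + ni) + ci` on pairs of integers, whose image is a residue class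
modulo `2 + i`. -/
def cosetParam (c : ℤ) (p : ℤ × ℤ) : ℤ × ℤ := (2 * p.1 - p.2, p.1 + 2 * p.2 + c)

lemma cosetParam_injective (c : ℤ) : Function.Injective (cosetParam c) := by
  rintro ⟨a, b⟩ ⟨a', b'⟩ h
  simp only [cosetParam, Prod.mk.injEq] at h ⊢
  omega

lemma range_cosetParam (c : ℤ) :
    Set.range (cosetParam c) = residueClass ⁻¹' {((2 - 2 * c : ℤ) : ZMod 5)} := by
  ext ⟨a, b⟩
  simp only [Set.mem_range, Prod.exists, Set.mem_preimage, Set.mem_singleton_iff, residueClass,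
    ZMod.intCast_eq_intCast_iff_dvd_sub, cosetParam, Prod.mk.injEq]
  constructor
  · rintro ⟨m, n, rfl, rfl⟩
    exact ⟨n, by push_cast; ring⟩
  · rintro ⟨k, hk⟩
    push_cast at hk
    exact ⟨b - 2 * k - c, k, by omega, by omega⟩

lemma pow_val_intCast {G : Type*} [GroupWithZero G] {ζ : G} {n : ℕ} [NeZero n] (hζ : ζ ^ n = 1)
    (m : ℤ) : ζ ^ (m : ZMod n).val = ζ ^ m := by
  have hζ0 : ζ ≠ 0 := by
    rintro rfl
    simp [NeZero.ne n] at hζ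
  conv_rhs => rw [← Int.emod_add_mul_ediv m n, zpow_add₀ hζ0, zpow_mul, zpow_natCast, hζ]
  rw [one_zpow, mul_one, ← ZMod.val_intCast, zpow_natCast]

variable {𝕜 : Type*} [NormedField 𝕜]

/-- The part of the double series of `thetaSeries q 1 ^ 2` over one residue class modulo `2 + i`. -/
noncomputable def classSum (q : 𝕜) (r : ZMod 5) : 𝕜 :=
  ∑' p : residueClass ⁻¹' {r}, q ^ (tri p.1.1 + tri p.1.2)

lemma classSum_neg_two_mul (q : 𝕜) (r : ZMod 5) : classSum q (-2 * r) = classSum q r := by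
  have hmem (p : ℤ × ℤ) : p ∈ residueClass ⁻¹' {r} ↔ mulI p ∈ residueClass ⁻¹' {-2 * r} := by
    simp only [Set.mem_preimage, Set.mem_singleton_iff, residueClass_mulI]
    revert r
    generalize residueClass p = s
    revert s
    decide
  rw [classSum, classSum, ← (mulI.subtypeEquiv hmem).tsum_eq]
  refine tsum_congr fun p ↦ ?_
  simp only [Equiv.subtypeEquiv_apply, mulI, Equiv.coe_fn_mk, tri_neg_add_one, add_comm]

lemma classSum_eq_classSum_two (q : 𝕜) {r : ZMod 5} (hr : r ≠ 0) :
    classSum q r = classSum q 2 := by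
  have h₁ : classSum q 3 = classSum q 1 := classSum_neg_two_mul q 1
  have h₂ : classSum q 1 = classSum q 2 := classSum_neg_two_mul q 2
  have h₄ : classSum q 2 = classSum q 4 := classSum_neg_two_mul q 4
  obtain rfl | rfl | rfl | rfl : r = 1 ∨ r = 2 ∨ r = 3 ∨ r = 4 := by decide +revert
  exacts [h₂, rfl, h₁.trans h₂, h₄.symm]

lemma classSum_eq_tsum (q : 𝕜) (c : ℤ) :
    classSum q ((2 - 2 * c : ℤ) : ZMod 5)
      = ∑' p : ℤ × ℤ, q ^ (tri (2 * p.1 - p.2) + tri (p.1 + 2 * p.2 + c)) := by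
  rw [classSum, ← range_cosetParam]
  exact tsum_range (fun p : ℤ × ℤ ↦ q ^ (tri p.1 + tri p.2)) (cosetParam_injective c)

variable [CompleteSpace 𝕜]

lemma thetaSeries_mul_thetaSeries {q z w : 𝕜} (hq0 : q ≠ 0) (hq : ‖q‖ < 1) (hz : z ≠ 0)
    (hw : w ≠ 0) : thetaSeries q z * thetaSeries q w
      = ∑' p : ℤ × ℤ, z ^ p.1 * w ^ p.2 * q ^ (tri p.1 + tri p.2) := by
  rw [thetaSeries, thetaSeries, tsum_mul_tsum_of_summable_norm
    (summable_norm_thetaSeries hq0 hq hz) (summable_norm_thetaSeries hq0 hq hw)]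
  refine tsum_congr fun p ↦ ?_
  rw [zpow_add₀ hq0]
  ring

lemma classSum_zero {q : 𝕜} (hq0 : q ≠ 0) (hq : ‖q‖ < 1) :
    classSum q 0 = q * thetaSeries (q ^ 5) 1 ^ 2 := by
  rw [show (0 : ZMod 5) = ((2 - 2 * 1 : ℤ) : ZMod 5) by decide, classSum_eq_tsum, sq,
    thetaSeries_mul_thetaSeries (pow_ne_zero 5 hq0) (norm_pow_lt_one hq (by norm_num : 5 ≠ 0))
      one_ne_zero one_ne_zero, ← tsum_mul_left]
  refine tsum_congr fun p ↦ ?_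
  have hexp : tri (2 * p.1 - p.2) + tri (p.1 + 2 * p.2 + 1) = 1 + 5 * (tri p.1 + tri p.2) := by
    linarith [two_mul_tri (2 * p.1 - p.2), two_mul_tri (p.1 + 2 * p.2 + 1), two_mul_tri p.1,
      two_mul_tri p.2]
  rw [hexp, zpow_add₀ hq0, zpow_mul, zpow_one, one_zpow, one_zpow, one_mul, one_mul]
  norm_cast

lemma classSum_two {q : 𝕜} (hq0 : q ≠ 0) (hq : ‖q‖ < 1) :
    classSum q 2 = thetaSeries (q ^ 5) q⁻¹ * thetaSeries (q ^ 5) (q ^ 2)⁻¹ := by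
  rw [show (2 : ZMod 5) = ((2 - 2 * 0 : ℤ) : ZMod 5) by decide, classSum_eq_tsum,
    thetaSeries_mul_thetaSeries (pow_ne_zero 5 hq0) (norm_pow_lt_one hq (by norm_num : 5 ≠ 0))
      (inv_ne_zero hq0) (inv_ne_zero (pow_ne_zero 2 hq0))]
  refine tsum_congr fun p ↦ ?_
  have hexp : tri (2 * p.1 - p.2) + tri (p.1 + 2 * p.2 + 0)
      = -p.1 + 2 * -p.2 + 5 * (tri p.1 + tri p.2) := by
    linarith [two_mul_tri (2 * p.1 - p.2), two_mul_tri (p.1 + 2 * p.2 + 0), two_mul_tri p.1,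
      two_mul_tri p.2]
  rw [hexp, zpow_add₀ hq0, zpow_add₀ hq0, zpow_mul, zpow_mul, inv_zpow', inv_zpow']
  norm_cast

lemma tsum_comp_mul_eq_sum {β γ : Type*} [Fintype γ] {f : β → 𝕜} (hf : Summable f) (c : β → γ)
    (g : γ → 𝕜) : ∑' b, g (c b) * f b = ∑ r, g r * ∑' b : c ⁻¹' {r}, f b := by
  classical
  have hsplit : (fun b ↦ g (c b) * f b) = fun b ↦ ∑ r, g r * (c ⁻¹' {r}).indicator f b := by
    funext b
    simp [Set.indicator_apply]
  rw [hsplit]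
  exact (hasSum_sum fun r _ ↦ (hasSum_subtype_iff_indicator.mp
    (hf.subtype (c ⁻¹' {r})).hasSum).mul_left (g r)).tsum_eq

lemma tsum_residueClass_mul {q : 𝕜} (hq0 : q ≠ 0) (hq : ‖q‖ < 1) (g : ZMod 5 → 𝕜) :
    ∑' p, g (residueClass p) * q ^ (tri p.1 + tri p.2)
      = g 0 * (classSum q 0 - classSum q 2) + (∑ r, g r) * classSum q 2 := by
  have hs := summable_norm_thetaSeries hq0 hq one_ne_zero
  have hsum : Summable fun p : ℤ × ℤ ↦ q ^ (tri p.1 + tri p.2) := by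
    simpa [zpow_add₀ hq0] using summable_mul_of_summable_norm hs hs
  have hclass (r : ZMod 5) : g r * classSum q r
      = (if r = 0 then g 0 * (classSum q 0 - classSum q 2) else 0) + g r * classSum q 2 := by
    split_ifs with hr
    · rw [hr]
      ring
    · rw [classSum_eq_classSum_two q hr, zero_add]
  calc ∑' p, g (residueClass p) * q ^ (tri p.1 + tri p.2)
      = ∑ r, g r * classSum q r := tsum_comp_mul_eq_sum hsum residueClass g
    _ = g 0 * (classSum q 0 - classSum q 2) + (∑ r, g r) * classSum q 2 := by
      simp only [hclass, sum_add_distrib, sum_ite_eq', mem_univ, if_true, sum_mul]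

lemma thetaSeries_one_sq {q : 𝕜} (hq0 : q ≠ 0) (hq : ‖q‖ < 1) :
    thetaSeries q 1 ^ 2 = classSum q 0 + 4 * classSum q 2 := by
  have h := tsum_residueClass_mul hq0 hq 1
  simp only [Pi.one_apply, sum_const, card_univ, ZMod.card, nsmul_eq_mul] at h
  rw [sq, thetaSeries_mul_thetaSeries hq0 hq one_ne_zero one_ne_zero]
  simp only [one_zpow, one_mul] at h ⊢
  linear_combination h

lemma thetaSeries_mul_thetaSeries_fifth_root {q ζ : 𝕜} (hq0 : q ≠ 0) (hq : ‖q‖ < 1)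
    (hζ : IsPrimitiveRoot ζ 5) :
    ζ ^ 2 * (thetaSeries q ζ * thetaSeries q (ζ ^ 2)⁻¹) = classSum q 0 - classSum q 2 := by
  have hζ0 : ζ ≠ 0 := hζ.ne_zero (by norm_num)
  have hsum : ∑ r : ZMod 5, ζ ^ r.val = 0 := by
    rw [← hζ.geom_sum_eq_zero (by norm_num)]
    exact Fin.sum_univ_eq_sum_range (ζ ^ ·) 5
  have h := tsum_residueClass_mul hq0 hq fun r ↦ ζ ^ r.val
  rw [hsum, ZMod.val_zero, pow_zero, one_mul, zero_mul, add_zero] at h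
  rw [← h, thetaSeries_mul_thetaSeries hq0 hq hζ0 (inv_ne_zero (pow_ne_zero 2 hζ0)),
    ← tsum_mul_left]
  refine tsum_congr fun p ↦ ?_
  rw [residueClass, pow_val_intCast hζ.pow_eq_one, zpow_add₀ hζ0, zpow_sub₀ hζ0, zpow_mul,
    inv_zpow]
  norm_cast
  ring

theorem thetaSeries_one_sq_sub {q : 𝕜} (hq0 : q ≠ 0) (hq : ‖q‖ < 1) :
    (thetaSeries q 1 ^ 2 - q * thetaSeries (q ^ 5) 1 ^ 2) * (eulerProd q * eulerProd (q ^ 10))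
      = 4 * (eulerProd (q ^ 2) * eulerProd (q ^ 5) ^ 3) := by
  rw [← thetaSeries_pow_five_mul_eulerProd hq0 hq, ← classSum_two hq0 hq, ← classSum_zero hq0 hq,
    thetaSeries_one_sq hq0 hq]
  ring

theorem thetaSeries_one_sq_sub_five {q ζ : 𝕜} (hq0 : q ≠ 0) (hq : ‖q‖ < 1)
    (hζ : IsPrimitiveRoot ζ 5) :
    (thetaSeries q 1 ^ 2 - 5 * q * thetaSeries (q ^ 5) 1 ^ 2)
        * (eulerProd (q ^ 2) * eulerProd (q ^ 5))
      = 4 * (eulerProd q ^ 3 * eulerProd (q ^ 10)) := by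
  have h := thetaSeries_fifth_root_mul_eulerProd hq0 hq hζ
  rw [thetaSeries_mul_thetaSeries_fifth_root hq0 hq hζ] at h
  rw [mul_assoc 5, ← classSum_zero hq0 hq, thetaSeries_one_sq hq0 hq]
  linear_combination -4 * h

end GaussianIntegers

section Real

lemma ofReal_eulerProd {q : ℝ} (hq : ‖q‖ < 1) :
    ((eulerProd q : ℝ) : ℂ) = eulerProd (q : ℂ) := by
  have h := (multipliable_one_sub_mul_pow q hq).map_tprod Complex.ofRealHom
    Complex.continuous_ofReal
  simpa [eulerProd, qPochhammer] using h

lemma ofReal_thetaSeries (q z : ℝ) :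
    ((thetaSeries q z : ℝ) : ℂ) = thetaSeries (q : ℂ) (z : ℂ) := by
  simp only [thetaSeries, Complex.ofReal_tsum, Complex.ofReal_mul, Complex.ofReal_zpow]

variable {q : ℝ}

lemma fneg_eq_eulerProd (hq0 : q ≠ 0) (hq : ‖q‖ < 1) : fneg q = eulerProd q :=
  tsum_pentagonal_eq_eulerProd hq0 hq

lemma thetaSeries_one_eq_two_mul_psi (hq0 : q ≠ 0) (hq : ‖q‖ < 1) :
    thetaSeries q 1 = 2 * psi q :=
  thetaSeries_one_eq_two_mul_tsum hq0 hq

lemma fneg_ne_zero (hq0 : q ≠ 0) (hq : ‖q‖ < 1) : fneg q ≠ 0 := by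
  rw [fneg_eq_eulerProd hq0 hq]
  exact eulerProd_ne_zero hq

lemma fneg_pow_eq_eulerProd (hq0 : q ≠ 0) (hq : ‖q‖ < 1) {n : ℕ} (hn : n ≠ 0) :
    fneg (q ^ n) = eulerProd (q ^ n) :=
  fneg_eq_eulerProd (pow_ne_zero n hq0) (norm_pow_lt_one hq hn)

lemma psi_mul_fneg (hq0 : q ≠ 0) (hq : ‖q‖ < 1) : psi q * fneg q = fneg (q ^ 2) ^ 2 := by
  have h := thetaSeries_one_mul_eulerProd hq0 hq
  rw [thetaSeries_one_eq_two_mul_psi hq0 hq, ← fneg_eq_eulerProd hq0 hq,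
    ← fneg_pow_eq_eulerProd hq0 hq two_ne_zero] at h
  linarith

theorem psi_sq_sub (hq0 : q ≠ 0) (hq : ‖q‖ < 1) :
    (psi q ^ 2 - q * psi (q ^ 5) ^ 2) * (fneg q * fneg (q ^ 10))
      = fneg (q ^ 2) * fneg (q ^ 5) ^ 3 := by
  have h := thetaSeries_one_sq_sub hq0 hq
  rw [thetaSeries_one_eq_two_mul_psi hq0 hq, thetaSeries_one_eq_two_mul_psi (pow_ne_zero 5 hq0)
    (norm_pow_lt_one hq (by norm_num)), ← fneg_eq_eulerProd hq0 hq,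
    ← fneg_pow_eq_eulerProd hq0 hq two_ne_zero, ← fneg_pow_eq_eulerProd hq0 hq (by norm_num),
    ← fneg_pow_eq_eulerProd hq0 hq (by norm_num)] at h
  linarith

theorem psi_sq_sub_five (hq0 : q ≠ 0) (hq : ‖q‖ < 1) :
    (psi q ^ 2 - 5 * q * psi (q ^ 5) ^ 2) * (fneg (q ^ 2) * fneg (q ^ 5))
      = fneg q ^ 3 * fneg (q ^ 10) := by
  have hreal : (thetaSeries q 1 ^ 2 - 5 * q * thetaSeries (q ^ 5) 1 ^ 2)
      * (eulerProd (q ^ 2) * eulerProd (q ^ 5)) = 4 * (eulerProd q ^ 3 * eulerProd (q ^ 10)) := by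
    have h := thetaSeries_one_sq_sub_five (q := (q : ℂ)) (by exact_mod_cast hq0)
      (by rwa [Complex.norm_real]) (Complex.isPrimitiveRoot_exp 5 (by norm_num))
    apply Complex.ofReal_injective
    push_cast
    rw [ofReal_thetaSeries, ofReal_thetaSeries, ofReal_eulerProd hq,
      ofReal_eulerProd (norm_pow_lt_one hq two_ne_zero),
      ofReal_eulerProd (norm_pow_lt_one hq (by norm_num)),
      ofReal_eulerProd (norm_pow_lt_one hq (by norm_num))]
    push_cast
    exact h
  rw [thetaSeries_one_eq_two_mul_psi hq0 hq, thetaSeries_one_eq_two_mul_psi (pow_ne_zero 5 hq0)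
    (norm_pow_lt_one hq (by norm_num)), ← fneg_eq_eulerProd hq0 hq,
    ← fneg_pow_eq_eulerProd hq0 hq two_ne_zero, ← fneg_pow_eq_eulerProd hq0 hq (by norm_num),
    ← fneg_pow_eq_eulerProd hq0 hq (by norm_num)] at hreal
  linarith

end Real

theorem stmt_2_general (q V : ℝ) (hq0 : q ≠ 0) (hq : |q| < 1)
    (hV : V = psi q ^ 2 / (q * psi (q ^ 5) ^ 2)) :
    fneg q ^ 2 * fneg (q ^ 2) ^ 2 / (q * fneg (q ^ 5) ^ 2 * fneg (q ^ 10) ^ 2)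
      = V * (V - 5) / (V - 1) := by
  have hfneg {n : ℕ} (hn : n ≠ 0) : fneg (q ^ n) ≠ 0 :=
    fneg_ne_zero (pow_ne_zero n hq0) (norm_pow_lt_one hq hn)
  have h₁ : fneg q ≠ 0 := fneg_ne_zero hq0 hq
  have h₂ : fneg (q ^ 2) ≠ 0 := hfneg (by norm_num)
  have h₅ : fneg (q ^ 5) ≠ 0 := hfneg (by norm_num)
  have h₁₀ : fneg (q ^ 10) ≠ 0 := hfneg (by norm_num)
  have hψ := eq_div_of_mul_eq h₁ (psi_mul_fneg hq0 hq)
  have hψ₅ : psi (q ^ 5) = fneg (q ^ 10) ^ 2 / fneg (q ^ 5) := by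
    simpa only [← pow_mul] using eq_div_of_mul_eq h₅
      (psi_mul_fneg (pow_ne_zero 5 hq0) (norm_pow_lt_one hq (by norm_num : 5 ≠ 0)))
  have hden : q * psi (q ^ 5) ^ 2 ≠ 0 := by
    rw [hψ₅]
    positivity
  have hV₁ : V - 1 = (psi q ^ 2 - q * psi (q ^ 5) ^ 2) / (q * psi (q ^ 5) ^ 2) := by
    rw [hV, sub_div, div_self hden]
  have hV₅ : V - 5 = (psi q ^ 2 - 5 * q * psi (q ^ 5) ^ 2) / (q * psi (q ^ 5) ^ 2) := by
    rw [hV, mul_assoc, sub_div, mul_div_assoc, div_self hden, mul_one]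
  rw [hV₁, hV₅, hV, eq_div_of_mul_eq (mul_ne_zero h₁ h₁₀) (psi_sq_sub hq0 hq),
    eq_div_of_mul_eq (mul_ne_zero h₂ h₅) (psi_sq_sub_five hq0 hq), hψ, hψ₅]
  field_simp

theorem stmt_2 (q V : ℝ) (hq0 : 0 < q) (hq1 : q < 1)
    (hV : V = psi q ^ 2 / (q * psi (q ^ 5) ^ 2)) (hV1 : V > 1) :
    fneg q ^ 2 * fneg (q ^ 2) ^ 2 / (q * fneg (q ^ 5) ^ 2 * fneg (q ^ 10) ^ 2)
      = V * (V - 5) / (V - 1) :=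
  stmt_2_general q V hq0.ne' (by rwa [abs_of_pos hq0]) hV
end
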